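/- arXiv:1302.2224 — 11 statements merged into one kernel-verified Lean document; each statement's English description precedes it below -/
import Mathlib

section
/- If u : (0,1) → ℝ is Lebesgue integrable, then Tu is Lebesgue integrable on (0,1) × (−1/2, 1/2) and ∫∫_{(0,1)×(−1/2,1/2)} (Tu)(x,y) dx dy = ∫₀¹ u(x) dx. (Integral Rule: κ⁰ ∫_Ω u dx = κ¹ ∫_{Ω×Ω¹} Tu dx dy, where here κ⁰ = 1/|Ω| = 1 and κ¹ = 1/|Ω×Ω¹| = 1.) -/
open Set MeasureTheory

/-- Two-scale transform: `(Tu)(x,y) = u(ε(⌊x/ε⌋ + 1/2) + εy)` with `ε = 1/N`. -/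
noncomputable def twoScale (N : ℕ) (u : ℝ → ℝ) (x y : ℝ) : ℝ :=
  u ((1 / (N : ℝ)) * ((⌊x / (1 / (N : ℝ))⌋ : ℝ) + 1 / 2) + (1 / (N : ℝ)) * y)

/-!
Only the index `⌊x/ε⌋` of the cell of `x` enters `Tu`. At unit scale, `⌊·⌋` pushes Lebesgue measure
on `ℝ` forward to the counting measure on `ℤ`, and `(n, y) ↦ n + y` glues the translates of a
half-open unit interval back together to `ℝ`. Hence `(x, y) ↦ ε(⌊x/ε⌋ + 1/2) + εy` preserves
Lebesgue measure, and as it keeps every point in its cell, it still does so above any union of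
cells. The integral rule is the change of variables along this map.
-/

/-- The map `(x, y) ↦ ε(⌊x/ε⌋ + 1/2) + εy` sending a macroscopic point `x` and a microscopic
coordinate `y` to the point with coordinate `y` in the cell of `x`; composition with it is the
two-scale transform. The cell size `ε` is any real number, not necessarily `1/N`. -/
noncomputable def twoScaleMap (ε : ℝ) (p : ℝ × ℝ) : ℝ :=
  ε * (⌊p.1 / ε⌋ + 1 / 2) + ε * p.2

theorem measurePreserving_floor :
    MeasurePreserving (Int.floor : ℝ → ℤ) volume Measure.count := by
  refine ⟨Int.measurable_floor, Measure.ext_of_singleton fun n => ?_⟩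
  rw [Measure.map_apply Int.measurable_floor (measurableSet_singleton n),
    Int.preimage_floor_singleton, Real.volume_Ico, Measure.count_singleton, add_sub_cancel_left,
    ENNReal.ofReal_one]

theorem measurePreserving_intCast_add (a : ℝ) :
    MeasurePreserving (fun p : ℤ × ℝ => (p.1 : ℝ) + p.2)
      (Measure.count.prod (volume.restrict (Ico a (a + 1)))) volume := by
  have measurable_add : Measurable fun p : ℤ × ℝ => (p.1 : ℝ) + p.2 := by fun_prop
  have map_translate (n : ℤ) : (volume.restrict (Ico a (a + 1))).map (fun y : ℝ => (n : ℝ) + y) =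
      volume.restrict (Ico (a + n) (a + n + 1)) := by
    have := (measurePreserving_add_left volume (n : ℝ)).restrict_preimage
      (measurableSet_Ico (a := a + n) (b := a + n + 1))
    rw [← this.map_eq, preimage_const_add_Ico]
    congr 3 <;> ring_nf
  refine ⟨measurable_add, ?_⟩
  calc (Measure.count.prod (volume.restrict (Ico a (a + 1)))).map (fun p : ℤ × ℝ => (p.1 : ℝ) + p.2)
      = Measure.sum fun n : ℤ =>
          (volume.restrict (Ico a (a + 1))).map (fun y : ℝ => (n : ℝ) + y) := by
        simp only [Measure.count, Measure.prod_sum_left, Measure.dirac_prod]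
        rw [Measure.map_sum measurable_add.aemeasurable]
        congr! 2 with n
        exact Measure.map_map measurable_add measurable_prodMk_left
    _ = Measure.sum fun n : ℤ => volume.restrict (Ico (a + n) (a + n + 1)) := by
        simp only [map_translate]
    _ = volume := by
        rw [← Measure.restrict_iUnion (pairwise_disjoint_Ico_add_intCast a)
          fun _ => measurableSet_Ico, iUnion_Ico_add_intCast, Measure.restrict_univ]

theorem measurePreserving_floor_add (a : ℝ) :
    MeasurePreserving (fun p : ℝ × ℝ => (⌊p.1⌋ : ℝ) + p.2)
      (volume.prod (volume.restrict (Ico a (a + 1)))) volume :=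
  (measurePreserving_intCast_add a).comp
    (measurePreserving_floor.prod (MeasurePreserving.id (volume.restrict (Ico a (a + 1)))))

theorem measurePreserving_mul_comp_div {Y : Type*} [MeasurableSpace Y] {ν : Measure Y} [SFinite ν]
    {f : ℝ × Y → ℝ} (hf : MeasurePreserving f (volume.prod ν) volume) {r : ℝ} (hr : r ≠ 0) :
    MeasurePreserving (fun p : ℝ × Y => r * f (p.1 / r, p.2)) (volume.prod ν) volume := by
  have div_right : MeasurePreserving (fun x : ℝ => x / r) volume (ENNReal.ofReal |r| • volume) := by
    refine ⟨by fun_prop, ?_⟩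
    simpa only [div_eq_mul_inv, inv_inv] using Real.map_volume_mul_right (inv_ne_zero hr)
  have rescale : MeasurePreserving (fun p : ℝ × Y => (p.1 / r, p.2)) (volume.prod ν)
      (ENNReal.ofReal |r| • volume.prod ν) := by
    rw [← Measure.prod_smul_left]
    exact div_right.prod (MeasurePreserving.id ν)
  have mul_left : MeasurePreserving (fun x : ℝ => r * x) (ENNReal.ofReal |r| • volume) volume :=
    ⟨by fun_prop, by rw [Measure.map_smul, Real.smul_map_volume_mul_left hr]⟩
  exact mul_left.comp ((hf.smul_measure (ENNReal.ofReal |r|)).comp rescale)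

theorem measurePreserving_twoScaleMap {ε : ℝ} (hε : ε ≠ 0) :
    MeasurePreserving (twoScaleMap ε)
      (volume.prod (volume.restrict (Ico (-(1 / 2) : ℝ) (1 / 2)))) volume := by
  have unit_scale : MeasurePreserving (fun p : ℝ × ℝ => 1 / 2 + ((⌊p.1⌋ : ℝ) + p.2))
      (volume.prod (volume.restrict (Ico (-(1 / 2) : ℝ) (1 / 2)))) volume := by
    have h := measurePreserving_floor_add (-(1 / 2))
    rw [show -(1 / 2) + 1 = (1 / 2 : ℝ) by norm_num] at h
    exact (measurePreserving_add_left volume (1 / 2 : ℝ)).comp h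
  convert measurePreserving_mul_comp_div unit_scale hε using 2 with p
  rw [twoScaleMap]
  ring

theorem floor_twoScaleMap_div {ε : ℝ} (hε : ε ≠ 0) (x : ℝ) {y : ℝ}
    (hy : y ∈ Ico (-(1 / 2) : ℝ) (1 / 2)) : ⌊twoScaleMap ε (x, y) / ε⌋ = ⌊x / ε⌋ := by
  have twoScaleMap_div : twoScaleMap ε (x, y) / ε = ⌊x / ε⌋ + (1 / 2 + y) := by
    rw [twoScaleMap]
    field_simp
    ring
  rw [twoScaleMap_div, Int.floor_intCast_add, add_eq_left, Int.floor_eq_zero_iff]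
  constructor <;> linarith [hy.1, hy.2]

theorem mem_Ico_intCast_mul_iff_floor_div {ε : ℝ} (hε : 0 < ε) {m n : ℤ} {x : ℝ} :
    x ∈ Ico (m * ε) (n * ε) ↔ ⌊x / ε⌋ ∈ Ico m n := by
  rw [mem_Ico, mem_Ico, Int.le_floor, Int.floor_lt, le_div_iff₀ hε, div_lt_iff₀ hε]

theorem twoScaleMap_mem_Ico_iff {ε : ℝ} (hε : 0 < ε) {m n : ℤ} {x y : ℝ}
    (hy : y ∈ Ico (-(1 / 2) : ℝ) (1 / 2)) :
    twoScaleMap ε (x, y) ∈ Ico (m * ε) (n * ε) ↔ x ∈ Ico (m * ε) (n * ε) := by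
  simp only [mem_Ico_intCast_mul_iff_floor_div hε, floor_twoScaleMap_div hε.ne' x hy]

theorem measurePreserving_twoScaleMap_restrict {ε : ℝ} (hε : 0 < ε) (m n : ℤ) :
    MeasurePreserving (twoScaleMap ε)
      (volume.restrict (Ioo (m * ε) (n * ε) ×ˢ Ioo (-(1 / 2) : ℝ) (1 / 2)))
      (volume.restrict (Ioo (m * ε) (n * ε))) := by
  have strip : (volume : Measure ℝ).prod (volume.restrict (Ico (-(1 / 2) : ℝ) (1 / 2))) =
      volume.restrict (univ ×ˢ Ico (-(1 / 2)) (1 / 2)) := by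
    rw [Measure.volume_eq_prod, ← Measure.prod_restrict, Measure.restrict_univ]
  have preimage_cells : twoScaleMap ε ⁻¹' Ico (m * ε) (n * ε) ∩ univ ×ˢ Ico (-(1 / 2)) (1 / 2) =
      Ico (m * ε) (n * ε) ×ˢ Ico (-(1 / 2)) (1 / 2) := by
    ext ⟨x, y⟩
    simp only [mem_inter_iff, mem_preimage, mem_prod, mem_univ, true_and]
    exact and_congr_left fun hy => twoScaleMap_mem_Ico_iff hε hy
  have on_strip := measurePreserving_twoScaleMap hε.ne'
  have on_cells := on_strip.restrict_preimage (measurableSet_Ico (a := m * ε) (b := n * ε))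
  rw [strip, Measure.restrict_restrict (on_strip.measurable measurableSet_Ico),
    preimage_cells] at on_cells
  rwa [Measure.volume_eq_prod, ← Measure.prod_restrict, restrict_Ioo_eq_restrict_Ico,
    restrict_Ioo_eq_restrict_Ico, Measure.prod_restrict]

theorem two_scale_integral_rule_general {E : Type*} [NormedAddCommGroup E] [NormedSpace ℝ E]
    {ε : ℝ} (hε : 0 < ε) (m n : ℤ) {u : ℝ → E} (hu : IntegrableOn u (Ioo (m * ε) (n * ε))) :
    IntegrableOn (fun p => u (twoScaleMap ε p))
        (Ioo (m * ε) (n * ε) ×ˢ Ioo (-(1 / 2) : ℝ) (1 / 2)) ∧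
    ∫ p in Ioo (m * ε) (n * ε) ×ˢ Ioo (-(1 / 2) : ℝ) (1 / 2), u (twoScaleMap ε p) =
      ∫ x in Ioo (m * ε) (n * ε), u x := by
  have h := measurePreserving_twoScaleMap_restrict hε m n
  refine ⟨h.integrable_comp_of_integrable hu, ?_⟩
  have hu_map := hu.aestronglyMeasurable
  rw [← h.map_eq] at hu_map
  rw [← integral_map h.aemeasurable hu_map, h.map_eq]

/-- **Integral Rule.** If `u` is Lebesgue integrable on `(0,1)`, then `Tu` is
integrable on `(0,1) × (-1/2, 1/2)` and the two integrals coincide. -/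
theorem two_scale_integral_rule (N : ℕ) (hN : 0 < N) (u : ℝ → ℝ)
    (hu : IntegrableOn u (Ioo (0 : ℝ) 1)) :
    IntegrableOn (fun p : ℝ × ℝ => twoScale N u p.1 p.2)
        (Ioo (0 : ℝ) 1 ×ˢ Ioo (-(1 / 2) : ℝ) (1 / 2)) ∧
    ∫ p in Ioo (0 : ℝ) 1 ×ˢ Ioo (-(1 / 2) : ℝ) (1 / 2),
        twoScale N u p.1 p.2 = ∫ x in Ioo (0 : ℝ) 1, u x := by
  have cells : Ioo (((0 : ℤ) : ℝ) * (1 / N)) (((N : ℤ) : ℝ) * (1 / N)) = Ioo 0 1 := by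
    simp [hN.ne']
  simpa only [cells, twoScale, twoScaleMap] using
    two_scale_integral_rule_general (one_div_pos.2 (Nat.cast_pos.2 hN)) 0 N (cells ▸ hu)
end

section
/- If u, v ∈ L²(0,1), then the product (Tu)(Tv) is integrable on (0,1) × (−1/2, 1/2) and ∫₀¹ u(x) v(x) dx = ∫∫_{(0,1)×(−1/2,1/2)} (Tu)(x,y) (Tv)(x,y) dx dy. (Inner Product Rule for the two-scale transform.) -/
open Set MeasureTheory

/-!
The map `S (x, y) = ε (⌊x/ε⌋ + 1/2) + ε y` factors through the pair `(k, y)` with `k = ⌊x/ε⌋`.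
Rounding `x` to `k` pushes Lebesgue measure on `ℝ` to `ε` times counting measure on `ℤ`, and
`(k, y) ↦ ε (k + 1/2) + ε y` identifies `ℤ × [-1/2, 1/2)`, with `ε` times the product measure, with
the line. Hence `S` preserves measure, and `∫ u v = ∫ (u v) ∘ S = ∫∫ (Tu) (Tv)`.
-/

lemma integral_comp_of_measurePreserving {α β E : Type*} [MeasurableSpace α] [MeasurableSpace β]
    [NormedAddCommGroup E] [NormedSpace ℝ E] {μ : Measure α} {ν : Measure β} {φ : α → β}
    (hφ : MeasurePreserving φ μ ν) {f : β → E} (hf : AEStronglyMeasurable f ν) :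
    ∫ a, f (φ a) ∂μ = ∫ b, f b ∂ν := by
  rw [← hφ.map_eq] at hf ⊢
  exact (integral_map hφ.aemeasurable hf).symm

/-- The index `k` of the cell `[kε, (k + 1)ε)` containing `x`. Unlike in the paper, cells are
half-open, so that they partition the line, and are counted from `0`. -/
noncomputable def cellIndex (ε x : ℝ) : ℤ :=
  ⌊x / ε⌋

/-- The point with local coordinate `y` in the cell of index `k`, for a pair `(k, y)`; the cell
itself corresponds to `y ∈ [-1/2, 1/2)`. -/
noncomputable def cellPoint (ε : ℝ) (q : ℤ × ℝ) : ℝ :=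
  ε * (q.1 + 1 / 2) + ε * q.2

/-- The change of variables behind the two-scale transform: `Tu = u ∘ unfolding ε`. -/
noncomputable def unfolding (ε : ℝ) : ℝ × ℝ → ℝ :=
  cellPoint ε ∘ Prod.map (cellIndex ε) id

lemma twoScale_eq_comp_unfolding (N : ℕ) (u : ℝ → ℝ) (p : ℝ × ℝ) :
    twoScale N u p.1 p.2 = u (unfolding (1 / (N : ℝ)) p) :=
  rfl

section Cells

variable {ε : ℝ}

lemma measurable_cellIndex (ε : ℝ) : Measurable (cellIndex ε) :=
  (measurable_id.div_const ε).floor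

lemma measurable_cellPoint (ε : ℝ) : Measurable (cellPoint ε) := by
  have h_cast : Measurable (fun q : ℤ × ℝ => (q.1 : ℝ)) := measurable_from_top.comp measurable_fst
  unfold cellPoint
  fun_prop

lemma preimage_cellIndex_Ico (hε : 0 < ε) (a b : ℤ) :
    cellIndex ε ⁻¹' Ico a b = Ico (a * ε) (b * ε) := by
  ext x
  simp only [cellIndex, mem_preimage, mem_Ico, Int.le_floor, Int.floor_lt, le_div_iff₀ hε,
    div_lt_iff₀ hε]

lemma volume_preimage_cellIndex_singleton (hε : 0 < ε) (k : ℤ) :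
    volume (cellIndex ε ⁻¹' {k}) = ENNReal.ofReal ε := by
  have h_singleton : ({k} : Set ℤ) = Ico k (k + 1) := by
    ext j
    simp only [mem_singleton_iff, mem_Ico]
    lia
  rw [h_singleton, preimage_cellIndex_Ico hε, Real.volume_Ico]
  push_cast
  congr 1
  ring

lemma cellIndex_cellPoint_eq_iff (hε : 0 < ε) (k : ℤ) (y : ℝ) :
    cellIndex ε (cellPoint ε (k, y)) = k ↔ y ∈ Ico (-(1 / 2) : ℝ) (1 / 2) := by
  have h_div : cellPoint ε (k, y) / ε = k + (1 / 2 + y) := by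
    simp only [cellPoint]
    field_simp
    ring
  rw [cellIndex, h_div, Int.floor_eq_iff, mem_Ico]
  constructor <;> rintro ⟨h_left, h_right⟩ <;> constructor <;> linarith

lemma ofReal_mul_volume_preimage_cellPoint (hε : 0 < ε) (k : ℤ) (s : Set ℝ) :
    ENNReal.ofReal ε * volume ((fun y => cellPoint ε (k, y)) ⁻¹' s) = volume s := by
  have h_affine : (fun y => cellPoint ε (k, y)) ⁻¹' s =
      (ε * ·) ⁻¹' ((ε * ((k : ℝ) + 1 / 2) + ·) ⁻¹' s) := rfl
  rw [h_affine, Real.volume_preimage_mul_left hε.ne', measure_preimage_add,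
    abs_of_pos (inv_pos.2 hε), ← mul_assoc, ← ENNReal.ofReal_mul hε.le, mul_inv_cancel₀ hε.ne',
    ENNReal.ofReal_one, one_mul]

lemma measurePreserving_cellIndex (hε : 0 < ε) :
    MeasurePreserving (cellIndex ε) volume (ENNReal.ofReal ε • Measure.count) := by
  refine ⟨measurable_cellIndex ε, Measure.ext_of_singleton fun k => ?_⟩
  rw [Measure.map_apply (measurable_cellIndex ε) (measurableSet_singleton k),
    volume_preimage_cellIndex_singleton hε, Measure.smul_apply, Measure.count_singleton,
    smul_eq_mul, mul_one]

lemma measurePreserving_cellPoint (hε : 0 < ε) :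
    MeasurePreserving (cellPoint ε)
      ((ENNReal.ofReal ε • Measure.count).prod (volume.restrict (Ico (-(1 / 2) : ℝ) (1 / 2))))
      volume := by
  refine ⟨measurable_cellPoint ε, Measure.ext fun s hs => ?_⟩
  have h_preimage : MeasurableSet (cellPoint ε ⁻¹' s) := measurable_cellPoint ε hs
  have h_slice (k : ℤ) : ENNReal.ofReal ε *
      volume.restrict (Ico (-(1 / 2) : ℝ) (1 / 2)) (Prod.mk k ⁻¹' (cellPoint ε ⁻¹' s)) =
        volume.restrict s (cellIndex ε ⁻¹' {k}) := by
    have h_inter : Prod.mk k ⁻¹' (cellPoint ε ⁻¹' s) ∩ Ico (-(1 / 2) : ℝ) (1 / 2) =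
        (fun y => cellPoint ε (k, y)) ⁻¹' (cellIndex ε ⁻¹' {k} ∩ s) := by
      ext y
      rw [mem_inter_iff, ← cellIndex_cellPoint_eq_iff hε k y, and_comm]
      rfl
    rw [Measure.restrict_apply (measurable_prodMk_left h_preimage), h_inter,
      ofReal_mul_volume_preimage_cellPoint hε,
      Measure.restrict_apply (measurable_cellIndex ε (measurableSet_singleton k))]
  calc Measure.map (cellPoint ε) _ s
      = ∑' k : ℤ, ENNReal.ofReal ε *
          volume.restrict (Ico (-(1 / 2) : ℝ) (1 / 2)) (Prod.mk k ⁻¹' (cellPoint ε ⁻¹' s)) := by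
        rw [Measure.map_apply (measurable_cellPoint ε) hs, Measure.prod_apply h_preimage,
          lintegral_smul_measure, lintegral_count, smul_eq_mul, ENNReal.tsum_mul_left]
    _ = ∑' k : ℤ, volume.restrict s (cellIndex ε ⁻¹' {k}) := tsum_congr h_slice
    _ = volume s := by
        rw [← Measure.restrict_apply_univ s, ← preimage_univ (f := cellIndex ε),
          ← tsum_measure_preimage_singleton countable_univ
            fun k _ => measurable_cellIndex ε (measurableSet_singleton k),
          tsum_univ fun k => volume.restrict s (cellIndex ε ⁻¹' {k})]

lemma measurePreserving_unfolding (hε : 0 < ε) :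
    MeasurePreserving (unfolding ε) (volume.restrict (univ ×ˢ Ico (-(1 / 2) : ℝ) (1 / 2)))
      volume := by
  rw [Measure.volume_eq_prod, ← Measure.prod_restrict, Measure.restrict_univ]
  exact (measurePreserving_cellPoint hε).comp
    ((measurePreserving_cellIndex hε).prod (MeasurePreserving.id _))

lemma measurePreserving_unfolding_restrict (hε : 0 < ε) (K : Set ℤ) :
    MeasurePreserving (unfolding ε)
      (volume.restrict ((cellIndex ε ⁻¹' K) ×ˢ Ico (-(1 / 2) : ℝ) (1 / 2)))
      (volume.restrict (cellIndex ε ⁻¹' K)) := by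
  have hK : MeasurableSet (cellIndex ε ⁻¹' K) := measurable_cellIndex ε K.to_countable.measurableSet
  have h_inter : unfolding ε ⁻¹' (cellIndex ε ⁻¹' K) ∩ univ ×ˢ Ico (-(1 / 2) : ℝ) (1 / 2) =
      (cellIndex ε ⁻¹' K) ×ˢ Ico (-(1 / 2) : ℝ) (1 / 2) := by
    ext ⟨x, y⟩
    simp only [mem_inter_iff, mem_prod, mem_univ, true_and, mem_preimage]
    refine and_congr_left fun hy => ?_
    have h_cell : cellIndex ε (unfolding ε (x, y)) = cellIndex ε x :=
      (cellIndex_cellPoint_eq_iff hε _ y).2 hy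
    rw [h_cell]
  have h_restrict := (measurePreserving_unfolding hε).restrict_preimage hK
  rwa [Measure.restrict_restrict ((measurePreserving_unfolding hε).measurable hK), h_inter]
    at h_restrict

lemma measurePreserving_unfolding_unitInterval {N : ℕ} (hN : 0 < N) :
    MeasurePreserving (unfolding (1 / (N : ℝ)))
      (volume.restrict (Ioo (0 : ℝ) 1 ×ˢ Ioo (-(1 / 2) : ℝ) (1 / 2)))
      (volume.restrict (Ioo (0 : ℝ) 1)) := by
  have hN_pos : (0 : ℝ) < N := Nat.cast_pos.2 hN
  have h_cells : cellIndex (1 / (N : ℝ)) ⁻¹' Ico 0 (N : ℤ) = Ico (0 : ℝ) 1 := by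
    rw [preimage_cellIndex_Ico (one_div_pos.2 hN_pos), Int.cast_zero, zero_mul, Int.cast_natCast,
      mul_one_div_cancel hN_pos.ne']
  have h_prod : (Ioo (0 : ℝ) 1 ×ˢ Ioo (-(1 / 2) : ℝ) (1 / 2) : Set (ℝ × ℝ)) =ᵐ[volume]
      (Ico (0 : ℝ) 1 ×ˢ Ico (-(1 / 2) : ℝ) (1 / 2) : Set (ℝ × ℝ)) :=
    Measure.set_prod_ae_eq Ioo_ae_eq_Ico Ioo_ae_eq_Ico
  rw [Measure.restrict_congr_set h_prod, Measure.restrict_congr_set Ioo_ae_eq_Ico, ← h_cells]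
  exact measurePreserving_unfolding_restrict (one_div_pos.2 hN_pos) (Ico 0 (N : ℤ))

end Cells

theorem two_scale_inner_product_rule_general (N : ℕ) (hN : 0 < N) (u v : ℝ → ℝ)
    (huv : IntegrableOn (fun x => u x * v x) (Ioo (0 : ℝ) 1)) :
    IntegrableOn (fun p : ℝ × ℝ => twoScale N u p.1 p.2 * twoScale N v p.1 p.2)
        (Ioo (0 : ℝ) 1 ×ˢ Ioo (-(1 / 2) : ℝ) (1 / 2)) ∧
    ∫ x in Ioo (0 : ℝ) 1, u x * v x
      = ∫ p in Ioo (0 : ℝ) 1 ×ˢ Ioo (-(1 / 2) : ℝ) (1 / 2),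
          twoScale N u p.1 p.2 * twoScale N v p.1 p.2 := by
  have h_unfolding := measurePreserving_unfolding_unitInterval hN
  simp only [twoScale_eq_comp_unfolding]
  exact ⟨h_unfolding.integrable_comp_of_integrable huv,
    (integral_comp_of_measurePreserving h_unfolding huv.aestronglyMeasurable).symm⟩

/-- **Inner Product Rule.** If `u, v ∈ L²(0,1)`, then `(Tu)(Tv)` is integrable
on `(0,1) × (-1/2, 1/2)` and `∫ u v = ∫∫ (Tu)(Tv)`. -/
theorem two_scale_inner_product_rule (N : ℕ) (hN : 0 < N) (u v : ℝ → ℝ)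
    (hu : MemLp u 2 (volume.restrict (Ioo (0 : ℝ) 1)))
    (hv : MemLp v 2 (volume.restrict (Ioo (0 : ℝ) 1))) :
    IntegrableOn (fun p : ℝ × ℝ => twoScale N u p.1 p.2 * twoScale N v p.1 p.2)
        (Ioo (0 : ℝ) 1 ×ˢ Ioo (-(1 / 2) : ℝ) (1 / 2)) ∧
    ∫ x in Ioo (0 : ℝ) 1, u x * v x
      = ∫ p in Ioo (0 : ℝ) 1 ×ˢ Ioo (-(1 / 2) : ℝ) (1 / 2),
          twoScale N u p.1 p.2 * twoScale N v p.1 p.2 :=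
  two_scale_inner_product_rule_general N hN u v (hu.integrable_mul hv)
end

section
/- If u ∈ L²(0,1), then Tu ∈ L²((0,1) × (−1/2, 1/2)) and ∫₀¹ |u(x)|² dx = ∫∫_{(0,1)×(−1/2,1/2)} |(Tu)(x,y)|² dx dy, i.e. the two-scale transform is an L²-isometry: ‖u‖²_{L²(0,1)} = ‖Tu‖²_{L²((0,1)×(−1/2,1/2))}. (Norm Rule.) -/
open Set MeasureTheory

/-!
The transform is composition with the map sending `(x, y)` to the point at relative position `y`
in the `ε`-cell of `x`. It depends on `x` only through this cell, whose length `ε` is exactly the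
Jacobian of `y ↦ x_c + εy`; summing over cells, the map pushes Lebesgue measure on
`ℝ × [-1/2, 1/2)` forward to Lebesgue measure on `ℝ`. Since it keeps every point in its own cell,
it remains measure preserving over any union of cells.
-/

theorem lintegral_image_affine {a : ℝ} (ha : a ≠ 0) (b : ℝ) {s : Set ℝ} (hs : MeasurableSet s)
    (f : ℝ → ENNReal) :
    ∫⁻ x in (fun y => a * y + b) '' s, f x
      = ENNReal.ofReal |a| * ∫⁻ y in s, f (a * y + b) := by
  have hderiv (y : ℝ) : HasDerivAt (fun y => a * y + b) a y := by
    simpa only [mul_one, id] using ((hasDerivAt_id y).const_mul a).add_const b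
  have hinj : Function.Injective fun y : ℝ => a * y + b :=
    (add_left_injective b).comp (mul_right_injective₀ ha)
  rw [lintegral_image_eq_lintegral_abs_deriv_mul hs
    (fun y _ => (hderiv y).hasDerivWithinAt) hinj.injOn,
    lintegral_const_mul' _ _ ENNReal.ofReal_ne_top]

theorem mem_Ico_mul_iff_floor_div_mem {K : Type*} [Field K] [LinearOrder K] [IsStrictOrderedRing K]
    [FloorRing K] {ε : K} (hε : 0 < ε) {m n : ℤ} {x : K} :
    x ∈ Ico (m * ε) (n * ε) ↔ ⌊x / ε⌋ ∈ Ico m n := by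
  rw [mem_Ico, mem_Ico, Int.le_floor, Int.floor_lt, le_div_iff₀ hε, div_lt_iff₀ hε]

theorem lintegral_eq_tsum_Ico_mul {ε : ℝ} (hε : 0 < ε) (μ : Measure ℝ) (f : ℝ → ENNReal) :
    ∫⁻ x, f x ∂μ = ∑' n : ℤ, ∫⁻ x in Ico (n * ε) ((n + 1 : ℤ) * ε), f x ∂μ := by
  simp only [← zsmul_eq_mul]
  rw [← lintegral_iUnion (fun _ => measurableSet_Ico) (pairwise_disjoint_Ico_zsmul ε),
    iUnion_Ico_zsmul hε, setLIntegral_univ]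

namespace twoScaleMap

variable {ε : ℝ}

theorem measurable : Measurable (twoScaleMap ε) := by
  unfold twoScaleMap
  fun_prop

theorem floor_div (hε : ε ≠ 0) {x y : ℝ} (hy : y ∈ Ico (-(1 / 2) : ℝ) (1 / 2)) :
    ⌊twoScaleMap ε (x, y) / ε⌋ = ⌊x / ε⌋ := by
  have hdiv : twoScaleMap ε (x, y) / ε = ⌊x / ε⌋ + (1 / 2 + y) := by
    rw [twoScaleMap]
    field_simp
    ring
  rw [hdiv, Int.floor_eq_iff]
  constructor <;> linarith [hy.1, hy.2]

theorem setLIntegral_cell (hε : 0 < ε) (n : ℤ) (f : ℝ → ENNReal) :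
    ∫⁻ x in Ico (n * ε) ((n + 1 : ℤ) * ε), ∫⁻ y in Ico (-(1 / 2) : ℝ) (1 / 2),
        f (twoScaleMap ε (x, y))
      = ∫⁻ z in Ico (n * ε) ((n + 1 : ℤ) * ε), f z := by
  have himage : (fun y => ε * y + ε * (n + 1 / 2)) '' Ico (-(1 / 2)) (1 / 2)
      = Ico (n * ε) ((n + 1 : ℤ) * ε) := by
    rw [image_affine_Ico hε]
    push_cast
    congr 1 <;> ring
  have hvolume : volume (Ico (n * ε) ((n + 1 : ℤ) * ε)) = ENNReal.ofReal ε := by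
    rw [Real.volume_Ico]
    push_cast
    congr 1
    ring
  have hcell : ∀ x ∈ Ico (n * ε) ((n + 1 : ℤ) * ε), ∀ y,
      twoScaleMap ε (x, y) = ε * y + ε * (n + 1 / 2) := by
    intro x hx y
    have hfloor : ⌊x / ε⌋ = n := by
      obtain ⟨hle, hlt⟩ := (mem_Ico_mul_iff_floor_div_mem hε).1 hx
      lia
    rw [twoScaleMap, hfloor, add_comm]
  calc
    _ = ∫⁻ _ in Ico (n * ε) ((n + 1 : ℤ) * ε), ∫⁻ y in Ico (-(1 / 2) : ℝ) (1 / 2),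
          f (ε * y + ε * (n + 1 / 2)) :=
      setLIntegral_congr_fun measurableSet_Ico fun x hx => by simp only [hcell x hx]
    _ = ENNReal.ofReal |ε| * ∫⁻ y in Ico (-(1 / 2) : ℝ) (1 / 2),
          f (ε * y + ε * (n + 1 / 2)) := by
      rw [setLIntegral_const, hvolume, abs_of_pos hε, mul_comm]
    _ = ∫⁻ z in Ico (n * ε) ((n + 1 : ℤ) * ε), f z := by
      rw [← lintegral_image_affine hε.ne' _ measurableSet_Ico, himage]

theorem measurePreserving (hε : 0 < ε) :
    MeasurePreserving (twoScaleMap ε)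
      (volume.prod (volume.restrict (Ico (-(1 / 2) : ℝ) (1 / 2)))) volume := by
  refine ⟨measurable, Measure.ext_of_lintegral _ fun f hf => ?_⟩
  rw [lintegral_map hf measurable,
    lintegral_prod (fun p => f (twoScaleMap ε p)) (hf.comp measurable).aemeasurable,
    lintegral_eq_tsum_Ico_mul hε, lintegral_eq_tsum_Ico_mul hε]
  exact tsum_congr fun n => setLIntegral_cell hε n f

theorem preimage_Ico_inter (hε : 0 < ε) (m n : ℤ) :
    twoScaleMap ε ⁻¹' Ico (m * ε) (n * ε) ∩ univ ×ˢ Ico (-(1 / 2) : ℝ) (1 / 2)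
      = Ico (m * ε) (n * ε) ×ˢ Ico (-(1 / 2) : ℝ) (1 / 2) := by
  ext ⟨x, y⟩
  simp only [mem_inter_iff, mem_preimage, mem_prod, mem_univ, true_and]
  refine and_congr_left fun hy => ?_
  rw [mem_Ico_mul_iff_floor_div_mem hε, floor_div hε.ne' hy, mem_Ico_mul_iff_floor_div_mem hε]

theorem measurePreserving_restrict_Ioo (hε : 0 < ε) (m n : ℤ) :
    MeasurePreserving (twoScaleMap ε)
      (volume.restrict (Ioo (m * ε) (n * ε) ×ˢ Ioo (-(1 / 2) : ℝ) (1 / 2)))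
      (volume.restrict (Ioo (m * ε) (n * ε))) := by
  have h := (measurePreserving hε).restrict_preimage
    (measurableSet_Ico (a := (m * ε : ℝ)) (b := n * ε))
  have hstrip : (volume : Measure ℝ).prod (volume.restrict (Ico (-(1 / 2) : ℝ) (1 / 2)))
      = volume.restrict (univ ×ˢ Ico (-(1 / 2) : ℝ) (1 / 2)) := by
    rw [Measure.volume_eq_prod, ← Measure.prod_restrict, Measure.restrict_univ]
  rw [hstrip, Measure.restrict_restrict (measurable measurableSet_Ico),
    preimage_Ico_inter hε] at h
  rwa [Measure.restrict_congr_set Ioo_ae_eq_Ico, Measure.volume_eq_prod,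
    Measure.restrict_congr_set (Measure.set_prod_ae_eq Ioo_ae_eq_Ico Ioo_ae_eq_Ico)]

end twoScaleMap

/-- **Norm Rule.** If `u ∈ L²(0,1)`, then `Tu ∈ L²((0,1) × (-1/2,1/2))` and
`∫ |u|² = ∫∫ |Tu|²`: the two-scale transform is an `L²`-isometry. -/
theorem two_scale_norm_rule (N : ℕ) (hN : 0 < N) (u : ℝ → ℝ)
    (hu : MemLp u 2 (volume.restrict (Ioo (0 : ℝ) 1))) :
    MemLp (fun p : ℝ × ℝ => twoScale N u p.1 p.2) 2
        (volume.restrict (Ioo (0 : ℝ) 1 ×ˢ Ioo (-(1 / 2) : ℝ) (1 / 2))) ∧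
    ∫ x in Ioo (0 : ℝ) 1, |u x| ^ 2
      = ∫ p in Ioo (0 : ℝ) 1 ×ˢ Ioo (-(1 / 2) : ℝ) (1 / 2),
          |twoScale N u p.1 p.2| ^ 2 := by
  have hN' : (0 : ℝ) < N := Nat.cast_pos.2 hN
  have hT : MeasurePreserving (twoScaleMap (1 / N))
      (volume.restrict (Ioo (0 : ℝ) 1 ×ˢ Ioo (-(1 / 2) : ℝ) (1 / 2)))
      (volume.restrict (Ioo (0 : ℝ) 1)) := by
    simpa only [Int.cast_zero, zero_mul, Int.cast_natCast, mul_one_div_cancel hN'.ne']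
      using twoScaleMap.measurePreserving_restrict_Ioo (one_div_pos.2 hN') 0 N
  refine ⟨hu.comp_measurePreserving hT, ?_⟩
  have hmeas : AEStronglyMeasurable (fun x => |u x| ^ 2) (volume.restrict (Ioo (0 : ℝ) 1)) :=
    hu.1.norm.pow 2
  rw [← hT.map_eq] at hmeas ⊢
  exact integral_map hT.aemeasurable hmeas
end

section
/- For every u ∈ L²(0,1) and every v ∈ L²((0,1) × (−1/2, 1/2)), ∫₀¹ (T*v)(x) u(x) dx = ∫∫_{(0,1)×(−1/2,1/2)} v(x,y) (Tu)(x,y) dx dy. In other words, the explicitly defined piecewise-averaging operator T* is the adjoint of the two-scale transform T. -/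
open Set MeasureTheory

/-- Adjoint two-scale transform:
`(T*v)(x) = (1/ε) ∫_{ε⌊x/ε⌋}^{ε(⌊x/ε⌋+1)} v(s, x/ε − ⌊x/ε⌋ − 1/2) ds`, `ε = 1/N`. -/
noncomputable def twoScaleAdj (N : ℕ) (v : ℝ → ℝ → ℝ) (x : ℝ) : ℝ :=
  (1 / (1 / (N : ℝ))) *
    ∫ s in ((1 / (N : ℝ)) * (⌊x / (1 / (N : ℝ))⌋ : ℝ))..((1 / (N : ℝ)) * ((⌊x / (1 / (N : ℝ))⌋ : ℝ) + 1)),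
      v s (x / (1 / (N : ℝ)) - (⌊x / (1 / (N : ℝ))⌋ : ℝ) - 1 / 2)

/-!
Write a point of the strip as `(x_c + ε a, y)`, with `x_c` the center of its cell and `a, y` in the
unit cell. The map `(x_c + ε a, y) ↦ (x_c + ε y, a)` is an involution of the strip which preserves
Lebesgue measure. It turns `u(x)` into `(Tu)(x, y)`, and averaging `v` composed with it over `y`
gives `T*v`; so the adjoint rule is invariance of the integral under this map, followed by Fubini.
-/

lemma measurePreserving_restrict_iUnion {α β ι : Type*} [MeasurableSpace α] [MeasurableSpace β]
    [Countable ι] {μ : Measure α} {ν : Measure β} {f : α → β} (hf : Measurable f)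
    {s : ι → Set α} (hs : ∀ i, MeasurableSet (s i)) (hs_disj : Pairwise (Function.onFun Disjoint s))
    {t : ι → Set β} (ht : ∀ i, MeasurableSet (t i)) (ht_disj : Pairwise (Function.onFun Disjoint t))
    (hst : ∀ i, MeasurePreserving f (μ.restrict (s i)) (ν.restrict (t i))) :
    MeasurePreserving f (μ.restrict (⋃ i, s i)) (ν.restrict (⋃ i, t i)) where
  measurable := hf
  map_eq := by
    rw [Measure.restrict_iUnion hs_disj hs, Measure.restrict_iUnion ht_disj ht,
      Measure.map_sum hf.aemeasurable]
    simp only [(hst _).map_eq]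

lemma measurePreserving_mul_prod_inv_mul {ε : ℝ} (hε : ε ≠ 0) :
    MeasurePreserving (Prod.map (ε * ·) (ε⁻¹ * ·) : ℝ × ℝ → ℝ × ℝ) where
  measurable := by fun_prop
  map_eq := by
    have jacobian : ENNReal.ofReal |ε⁻¹| * ENNReal.ofReal |ε⁻¹⁻¹| = 1 := by
      rw [← ENNReal.ofReal_mul (abs_nonneg _), ← abs_mul, mul_inv_cancel₀ (inv_ne_zero hε),
        abs_one, ENNReal.ofReal_one]
    rw [Measure.volume_eq_prod, ← Measure.map_prod_map _ _ (by fun_prop) (by fun_prop),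
      Real.map_volume_mul_left hε, Real.map_volume_mul_left (inv_ne_zero hε),
      Measure.prod_smul_left, Measure.prod_smul_right, smul_smul, jacobian, one_smul]

lemma measurePreserving_affine_swap {ε : ℝ} (hε : ε ≠ 0) (b : ℝ) :
    MeasurePreserving (fun p : ℝ × ℝ => (b + ε * p.2, ε⁻¹ * (p.1 - b))) := by
  have factorization : (fun p : ℝ × ℝ => (b + ε * p.2, ε⁻¹ * (p.1 - b))) =
      (fun p => (b, 0) + p) ∘ Prod.map (ε * ·) (ε⁻¹ * ·) ∘ Prod.swap ∘ fun p => p - (b, 0) := by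
    ext p <;> simp
  rw [factorization]
  exact (measurePreserving_add_left volume (b, 0)).comp <|
    (measurePreserving_mul_prod_inv_mul hε).comp <|
      Measure.measurePreserving_swap.comp (measurePreserving_sub_right volume (b, 0))

/-- The half-open reference cell `[-1/2, 1/2)`. Including the left endpoint makes `cellSwap` an
involution at every point, not only almost everywhere. -/
def unitCell : Set ℝ := Ico (-(1 / 2)) (1 / 2)

lemma measurableSet_unitCell : MeasurableSet unitCell := measurableSet_Ico

/-- The strip `E × [-1/2, 1/2)`, where `E` is the union of the `ε`-cells `{x | ⌊x / ε⌋ = n}` with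
`n ∈ A`. -/
def cellStrip (ε : ℝ) (A : Set ℤ) : Set (ℝ × ℝ) := ((fun x => ⌊x / ε⌋) ⁻¹' A) ×ˢ unitCell

/-- The map `(x_c + ε a, y) ↦ (x_c + ε y, a)` exchanging the position `a` inside the `ε`-cell with
center `x_c` and the microscopic variable `y`. Both transforms are expressed through it. -/
noncomputable def cellSwap (ε : ℝ) (p : ℝ × ℝ) : ℝ × ℝ :=
  (ε * ((⌊p.1 / ε⌋ : ℝ) + 1 / 2) + ε * p.2, p.1 / ε - (⌊p.1 / ε⌋ : ℝ) - 1 / 2)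

section CellSwap

variable {ε : ℝ}

lemma measurable_cellSwap : Measurable (cellSwap ε) := by
  unfold cellSwap
  fun_prop

lemma floor_cell_point_div_eq_iff (hε : ε ≠ 0) (n : ℤ) (y : ℝ) :
    ⌊(ε * ((n : ℝ) + 1 / 2) + ε * y) / ε⌋ = n ↔ y ∈ unitCell := by
  have rescale : (ε * ((n : ℝ) + 1 / 2) + ε * y) / ε = n + 1 / 2 + y := by field_simp
  rw [rescale, Int.floor_eq_iff, unitCell, mem_Ico]
  constructor <;> rintro ⟨h₁, h₂⟩ <;> constructor <;> linarith

lemma sub_half_mem_unitCell_iff (n : ℤ) (t : ℝ) :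
    t - n - 1 / 2 ∈ unitCell ↔ ⌊t⌋ = n := by
  rw [Int.floor_eq_iff, unitCell, mem_Ico]
  constructor <;> rintro ⟨h₁, h₂⟩ <;> constructor <;> linarith

lemma cellSwap_cellSwap (hε : ε ≠ 0) {p : ℝ × ℝ} (hp : p.2 ∈ unitCell) :
    cellSwap ε (cellSwap ε p) = p := by
  have same_cell : ⌊(cellSwap ε p).1 / ε⌋ = ⌊p.1 / ε⌋ :=
    (floor_cell_point_div_eq_iff hε _ _).2 hp
  rw [cellSwap, same_cell]
  ext <;> simp only [cellSwap] <;> field_simp <;> ring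

lemma measurableSet_cellStrip (ε : ℝ) (A : Set ℤ) : MeasurableSet (cellStrip ε A) :=
  ((measurable_id.div_const ε).floor .of_discrete).prod measurableSet_unitCell

lemma disjoint_cellStrip {A B : Set ℤ} (hAB : Disjoint A B) :
    Disjoint (cellStrip ε A) (cellStrip ε B) :=
  (hAB.preimage _).set_prod_left _ _

lemma cellStrip_eq_iUnion_singleton (A : Set ℤ) :
    cellStrip ε A = ⋃ n : A, cellStrip ε {(n : ℤ)} := by
  ext p
  simp [cellStrip]

lemma measurePreserving_cellSwap_singleton (hε : ε ≠ 0) (n : ℤ) :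
    MeasurePreserving (cellSwap ε) (volume.restrict (cellStrip ε {n}))
      (volume.restrict (cellStrip ε {n})) := by
  set b := ε * ((n : ℝ) + 1 / 2) with hb
  have affine_snd (x : ℝ) : ε⁻¹ * (x - b) = x / ε - n - 1 / 2 := by
    rw [hb]
    field_simp
    ring
  have affine_floor (y : ℝ) : ⌊(b + ε * y) / ε⌋ = n ↔ y ∈ unitCell :=
    floor_cell_point_div_eq_iff hε n y
  have preimage_eq : (fun p : ℝ × ℝ => (b + ε * p.2, ε⁻¹ * (p.1 - b))) ⁻¹' cellStrip ε {n} =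
      cellStrip ε {n} := by
    ext p
    simp only [cellStrip, mem_preimage, mem_prod, mem_singleton_iff, affine_floor,
      affine_snd, sub_half_mem_unitCell_iff]
    exact and_comm
  have affine :=
    (measurePreserving_affine_swap hε b).restrict_preimage (measurableSet_cellStrip ε {n})
  rw [preimage_eq] at affine
  refine affine.congr measurable_cellSwap ?_
  filter_upwards [ae_restrict_mem (measurableSet_cellStrip ε {n})] with p hp
  have floor_eq : ⌊p.1 / ε⌋ = n := hp.1
  simp only [cellSwap, floor_eq, affine_snd, ← hb]

lemma measurePreserving_cellSwap (hε : ε ≠ 0) (A : Set ℤ) :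
    MeasurePreserving (cellSwap ε) (volume.restrict (cellStrip ε A))
      (volume.restrict (cellStrip ε A)) := by
  have pairwise_disjoint :
      Pairwise (Function.onFun Disjoint fun n : A => cellStrip ε {(n : ℤ)}) := fun _ _ hmn =>
    disjoint_cellStrip (disjoint_singleton.2 (Subtype.coe_ne_coe.2 hmn))
  rw [cellStrip_eq_iUnion_singleton A]
  exact measurePreserving_restrict_iUnion measurable_cellSwap
    (fun _ => measurableSet_cellStrip _ _) pairwise_disjoint
    (fun _ => measurableSet_cellStrip _ _) pairwise_disjoint
    fun n => measurePreserving_cellSwap_singleton hε n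

end CellSwap

section TwoScale

variable {N : ℕ}

lemma floor_div_one_div_preimage_Ico (hN : N ≠ 0) :
    (fun x : ℝ => ⌊x / (1 / (N : ℝ))⌋) ⁻¹' Ico 0 (N : ℤ) = Ico 0 1 := by
  have hN_pos : (0 : ℝ) < N := by positivity
  ext x
  simp only [mem_preimage, mem_Ico, Int.floor_nonneg, Int.floor_lt, div_div_eq_mul_div, div_one,
    Int.cast_natCast, mul_nonneg_iff_of_pos_right hN_pos, mul_lt_iff_lt_one_left hN_pos]

lemma measurePreserving_cellSwap_unit (hN : N ≠ 0) :
    MeasurePreserving (cellSwap (1 / N))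
      (volume.restrict (Ioo (0 : ℝ) 1 ×ˢ Ioo (-(1 / 2) : ℝ) (1 / 2)))
      (volume.restrict (Ioo (0 : ℝ) 1 ×ˢ Ioo (-(1 / 2) : ℝ) (1 / 2))) := by
  have ae_eq : (Ioo (0 : ℝ) 1 ×ˢ Ioo (-(1 / 2) : ℝ) (1 / 2) : Set (ℝ × ℝ)) =ᵐ[volume]
      cellStrip (1 / N) (Ico 0 (N : ℤ)) := by
    rw [cellStrip, floor_div_one_div_preimage_Ico hN]
    exact Measure.set_prod_ae_eq Ioo_ae_eq_Ico Ioo_ae_eq_Ico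
  rw [Measure.restrict_congr_set ae_eq]
  exact measurePreserving_cellSwap (by positivity) _

lemma memLp_twoScale (hN : N ≠ 0) {u : ℝ → ℝ} {p : ENNReal}
    (hu : MemLp u p (volume.restrict (Ioo (0 : ℝ) 1))) :
    MemLp (fun q : ℝ × ℝ => twoScale N u q.1 q.2) p
      (volume.restrict (Ioo (0 : ℝ) 1 ×ˢ Ioo (-(1 / 2) : ℝ) (1 / 2))) := by
  have hu_fst := hu.comp_fst (volume.restrict (Ioo (-(1 / 2) : ℝ) (1 / 2)))
  rw [Measure.prod_restrict] at hu_fst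
  exact hu_fst.comp_measurePreserving (measurePreserving_cellSwap_unit hN)

lemma twoScale_cellSwap (hN : N ≠ 0) (u : ℝ → ℝ) {p : ℝ × ℝ} (hp : p.2 ∈ unitCell) :
    twoScale N u (cellSwap (1 / N) p).1 (cellSwap (1 / N) p).2 = u p.1 :=
  congrArg (fun q : ℝ × ℝ => u q.1) (cellSwap_cellSwap (by positivity) hp)

lemma setIntegral_comp_cellSwap_eq_twoScaleAdj (hN : N ≠ 0) (v : ℝ → ℝ → ℝ) (x : ℝ) :
    ∫ y in Ioo (-(1 / 2) : ℝ) (1 / 2), v (cellSwap (1 / N) (x, y)).1 (cellSwap (1 / N) (x, y)).2 =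
      twoScaleAdj N v x := by
  have hε : 1 / (N : ℝ) ≠ 0 := by positivity
  rw [← integral_Ioc_eq_integral_Ioo, ← intervalIntegral.integral_of_le (by norm_num)]
  simp only [cellSwap, twoScaleAdj]
  rw [intervalIntegral.integral_comp_add_mul (fun s => v s _) hε, smul_eq_mul,
    one_div (1 / (N : ℝ))]
  congr 2 <;> ring

end TwoScale

theorem two_scale_adjoint_rule_general (N : ℕ) (hN : 0 < N) (u : ℝ → ℝ) (v : ℝ → ℝ → ℝ)
    (huv : IntegrableOn (fun p : ℝ × ℝ => v p.1 p.2 * twoScale N u p.1 p.2)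
      (Ioo (0 : ℝ) 1 ×ˢ Ioo (-(1 / 2) : ℝ) (1 / 2))) :
    ∫ x in Ioo (0 : ℝ) 1, twoScaleAdj N v x * u x
      = ∫ p in Ioo (0 : ℝ) 1 ×ˢ Ioo (-(1 / 2) : ℝ) (1 / 2),
          v p.1 p.2 * twoScale N u p.1 p.2 := by
  set Q : Set (ℝ × ℝ) := Ioo (0 : ℝ) 1 ×ˢ Ioo (-(1 / 2) : ℝ) (1 / 2)
  have preserving := measurePreserving_cellSwap_unit hN.ne'
  let f (p : ℝ × ℝ) : ℝ := v p.1 p.2 * twoScale N u p.1 p.2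
  let w (p : ℝ × ℝ) : ℝ := v (cellSwap (1 / N) p).1 (cellSwap (1 / N) p).2
  have comp_eq : EqOn (f ∘ cellSwap (1 / N)) (fun p => w p * u p.1) Q := fun p hp =>
    congrArg (w p * ·) (twoScale_cellSwap hN.ne' u (Ioo_subset_Ico_self hp.2))
  have hQ : MeasurableSet Q := measurableSet_Ioo.prod measurableSet_Ioo
  have integrable_swapped : IntegrableOn (fun p => w p * u p.1) Q :=
    (preserving.integrable_comp_of_integrable huv).congr (comp_eq.aeEq_restrict hQ)
  calc ∫ x in Ioo (0 : ℝ) 1, twoScaleAdj N v x * u x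
      = ∫ x in Ioo (0 : ℝ) 1, ∫ y in Ioo (-(1 / 2) : ℝ) (1 / 2), w (x, y) * u x := by
        simp only [integral_mul_const, w, setIntegral_comp_cellSwap_eq_twoScaleAdj hN.ne']
    _ = ∫ p in Q, w p * u p.1 := (setIntegral_prod _ integrable_swapped).symm
    _ = ∫ p in Q, f (cellSwap (1 / N) p) := (setIntegral_congr_fun hQ comp_eq).symm
    _ = ∫ p in Q, f p := by
        rw [← integral_map preserving.aemeasurable (preserving.map_eq.symm ▸ huv.1),
          preserving.map_eq]

/-- **T\* is the adjoint of T.** For every `u ∈ L²(0,1)` and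
`v ∈ L²((0,1) × (-1/2,1/2))`, `∫ (T*v) u = ∫∫ v (Tu)`. -/
theorem two_scale_adjoint_rule (N : ℕ) (hN : 0 < N) (u : ℝ → ℝ) (v : ℝ → ℝ → ℝ)
    (hu : MemLp u 2 (volume.restrict (Ioo (0 : ℝ) 1)))
    (hv : MemLp (fun p : ℝ × ℝ => v p.1 p.2) 2
      (volume.restrict (Ioo (0 : ℝ) 1 ×ˢ Ioo (-(1 / 2) : ℝ) (1 / 2)))) :
    ∫ x in Ioo (0 : ℝ) 1, twoScaleAdj N v x * u x
      = ∫ p in Ioo (0 : ℝ) 1 ×ˢ Ioo (-(1 / 2) : ℝ) (1 / 2),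
          v p.1 p.2 * twoScale N u p.1 p.2 :=
  two_scale_adjoint_rule_general N hN u v <|
    hv.integrable_mul (memLp_twoScale hN.ne' hu)
end

section
/- Let v : ℝ × ℝ → ℝ be infinitely differentiable, 1-periodic in its second argument, and suppose that for every j ≥ 0, every x♯ ∈ {0, 1} and every y ∈ ℝ one has (∂^j v/∂x♯^j)(x♯, y) = 0 (i.e. v and all its derivatives in the first variable vanish on the boundary of (0,1)). Then the function Bv : x ↦ v(x, x/ε − 1/2) is infinitely differentiable on ℝ and every derivative of Bv vanishes at x = 0 and at x = 1. (Boundary Conditions of Bv: if v ∈ C₀^∞(Ω♯; C^∞(Ω¹)) then Bv ∈ C₀^∞(Ω).) -/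
open Set

/-- `Bv : x ↦ v(x, x/ε − 1/2)` with `ε = 1/N`. -/
noncomputable def smoothAdj (N : ℕ) (v : ℝ → ℝ → ℝ) (x : ℝ) : ℝ :=
  v x (x / (1 / (N : ℝ)) - 1 / 2)

/-!
Suppose `f` and all its partial derivatives in `x` vanish on `{x₀} × F`. By symmetry of second
derivatives, `∂ᵥ(∂_w f) = ∂_w(∂ᵥf)` for `v` in the `x`-direction and `w` arbitrary, and `∂ᵥf`
satisfies the same hypothesis as `f`; by induction on the order, so does every `∂_w f`. Hence all
mixed derivatives of `f` vanish on `{x₀} × F`, and by the Faà di Bruno formula `x ↦ f (x, φ x)`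
vanishes to infinite order at `x₀` for every smooth `φ`.
-/

open scoped ContDiff

section Flat

variable {𝕜 : Type*} [NontriviallyNormedField 𝕜]
  {E : Type*} [NormedAddCommGroup E] [NormedSpace 𝕜 E]
  {F : Type*} [NormedAddCommGroup F] [NormedSpace 𝕜 F]
  {G : Type*} [NormedAddCommGroup G] [NormedSpace 𝕜 G]

variable (𝕜) in
/-- A function is flat at `x` if it vanishes to infinite order there. The order `0` is included, so
the value at `x` is zero as well. -/
def IsFlatAt (f : E → F) (x : E) : Prop :=
  ∀ n : ℕ, iteratedFDeriv 𝕜 n f x = 0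

theorem isFlatAt_iff_iteratedDeriv_eq_zero {f : 𝕜 → F} {x : 𝕜} :
    IsFlatAt 𝕜 f x ↔ ∀ n : ℕ, iteratedDeriv n f x = 0 := by
  refine forall_congr' fun n => ?_
  rw [← norm_eq_zero, norm_iteratedFDeriv_eq_norm_iteratedDeriv, norm_eq_zero]

theorem contDiff_infty_fderiv_apply_const {f : E → F} (hf : ContDiff 𝕜 ∞ f) (v : E) :
    ContDiff 𝕜 ∞ (fun x => fderiv 𝕜 f x v) :=
  (hf.fderiv_right (by simp)).clm_apply contDiff_const

theorem iteratedFDeriv_succ_eq_zero_iff {f : E → F} {n : ℕ} (hf : ContDiff 𝕜 (n + 1) f) {x : E} :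
    iteratedFDeriv 𝕜 (n + 1) f x = 0 ↔
      ∀ v, iteratedFDeriv 𝕜 n (fun x => fderiv 𝕜 f x v) x = 0 := by
  have hf' : ContDiff 𝕜 n (fderiv 𝕜 f) := hf.fderiv_right le_rfl
  have hnorm : iteratedFDeriv 𝕜 (n + 1) f x = 0 ↔ iteratedFDeriv 𝕜 n (fderiv 𝕜 f) x = 0 := by
    rw [← norm_eq_zero, ← norm_iteratedFDeriv_fderiv, norm_eq_zero]
  simp only [hnorm, ContinuousMultilinearMap.ext_iff, ContinuousLinearMap.ext_iff,
    iteratedFDeriv_clm_apply_const_apply hf' le_rfl, zero_apply]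
  exact forall_comm

namespace IsFlatAt

theorem eq_zero {f : E → F} {x : E} (h : IsFlatAt 𝕜 f x) : f x = 0 := by
  simpa using congrArg norm (h 0)

theorem fderiv_apply_const {f : E → F} {x : E} (h : IsFlatAt 𝕜 f x) (hf : ContDiff 𝕜 ∞ f) (v : E) :
    IsFlatAt 𝕜 (fun x => fderiv 𝕜 f x v) x := fun n =>
  (iteratedFDeriv_succ_eq_zero_iff (contDiff_infty.1 hf (n + 1))).1 (h (n + 1)) v

theorem comp {g : F → G} {f : E → F} {x : E} (h : IsFlatAt 𝕜 g (f x))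
    (hg : ContDiffAt 𝕜 ∞ g (f x)) (hf : ContDiffAt 𝕜 ∞ f x) : IsFlatAt 𝕜 (g ∘ f) x := fun n => by
  rw [iteratedFDeriv_comp hg hf (mod_cast le_top)]
  refine Finset.sum_eq_zero fun c _ => ?_
  ext m
  simp [FormalMultilinearSeries.compAlongOrderedFinpartition_apply, ftaylorSeries, h c.length]

end IsFlatAt

theorem fderiv_comp_prodMk_left {f : E × F → G} {x : E} {y : F}
    (hf : DifferentiableAt 𝕜 f (x, y)) :
    fderiv 𝕜 (fun x => f (x, y)) x = fderiv 𝕜 f (x, y) ∘L .inl 𝕜 E F :=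
  (hf.hasFDerivAt.comp x (hasFDerivAt_prodMk_left x y)).fderiv

theorem fderiv_comp_prodMk_right {f : E × F → G} {x : E} {y : F}
    (hf : DifferentiableAt 𝕜 f (x, y)) :
    fderiv 𝕜 (fun y => f (x, y)) y = fderiv 𝕜 f (x, y) ∘L .inr 𝕜 E F :=
  (hf.hasFDerivAt.comp y (hasFDerivAt_prodMk_right x y)).fderiv

theorem fderiv_eq_zero_of_isFlatAt_prodMk_left {f : E × F → G} {x₀ : E} {y : F}
    (hf : DifferentiableAt 𝕜 f (x₀, y)) (h : ∀ y, IsFlatAt 𝕜 (fun x => f (x, y)) x₀) :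
    fderiv 𝕜 f (x₀, y) = 0 := by
  have hleft : fderiv 𝕜 (fun x => f (x, y)) x₀ = 0 := by
    rw [← norm_eq_zero, ← norm_iteratedFDeriv_one, h y 1, norm_zero]
  have hright : (fun y => f (x₀, y)) = fun _ => 0 := funext fun y => (h y).eq_zero
  apply ContinuousLinearMap.prod_ext
  · rw [← fderiv_comp_prodMk_left hf, hleft, ContinuousLinearMap.zero_comp]
  · rw [← fderiv_comp_prodMk_right hf, hright, fderiv_fun_const, Pi.zero_apply,
      ContinuousLinearMap.zero_comp]

theorem fderiv_fderiv_apply_comm {f : E → F} {x : E} (hf : DifferentiableAt 𝕜 (fderiv 𝕜 f) x)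
    (hsymm : IsSymmSndFDerivAt 𝕜 f x) (v w : E) :
    fderiv 𝕜 (fun x => fderiv 𝕜 f x v) x w = fderiv 𝕜 (fun x => fderiv 𝕜 f x w) x v := by
  simpa [fderiv_clm_apply hf (differentiableAt_const _)] using hsymm w v

end Flat

section Slices

variable {𝕜 : Type*} [RCLike 𝕜]
  {E : Type*} [NormedAddCommGroup E] [NormedSpace 𝕜 E]
  {F : Type*} [NormedAddCommGroup F] [NormedSpace 𝕜 F]
  {G : Type*} [NormedAddCommGroup G] [NormedSpace 𝕜 G]

theorem fderiv_fderiv_apply_prodMk_left {f : E × F → G} (hf : ContDiff 𝕜 2 f) (x v : E) (y : F)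
    (w : E × F) :
    fderiv 𝕜 (fun x => fderiv 𝕜 f (x, y) w) x v =
      fderiv 𝕜 (fun p => fderiv 𝕜 f p (v, 0)) (x, y) w := by
  have hf' : Differentiable 𝕜 (fderiv 𝕜 f) :=
    (hf.fderiv_right (m := 1) le_rfl).differentiable one_ne_zero
  have hsymm : IsSymmSndFDerivAt 𝕜 f (x, y) := hf.contDiffAt.isSymmSndFDerivAt (by simp)
  have hw : DifferentiableAt 𝕜 (fun p => fderiv 𝕜 f p w) (x, y) :=
    (hf' _).clm_apply (differentiableAt_const w)
  calc fderiv 𝕜 (fun x => fderiv 𝕜 f (x, y) w) x v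
    _ = fderiv 𝕜 (fun p => fderiv 𝕜 f p w) (x, y) (v, 0) := by
      rw [fderiv_comp_prodMk_left hw, ContinuousLinearMap.comp_apply,
        ContinuousLinearMap.inl_apply]
    _ = fderiv 𝕜 (fun p => fderiv 𝕜 f p (v, 0)) (x, y) w :=
      fderiv_fderiv_apply_comm (hf' _) hsymm w (v, 0)

theorem isFlatAt_fderiv_apply_prodMk_left {f : E × F → G} {x₀ : E} (hf : ContDiff 𝕜 ∞ f)
    (h : ∀ y, IsFlatAt 𝕜 (fun x => f (x, y)) x₀) (y : F) (w : E × F) :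
    IsFlatAt 𝕜 (fun x => fderiv 𝕜 f (x, y) w) x₀ := by
  intro n
  induction n generalizing f with
  | zero =>
    ext1
    simp [fderiv_eq_zero_of_isFlatAt_prodMk_left (hf.differentiable (by simp) _) h]
  | succ n ih =>
    have hsmooth : ContDiff 𝕜 ∞ (fun x => fderiv 𝕜 f (x, y) w) :=
      (contDiff_infty_fderiv_apply_const hf w).comp (contDiff_prodMk_left y)
    rw [iteratedFDeriv_succ_eq_zero_iff (contDiff_infty.1 hsmooth (n + 1))]
    intro v
    have hpartial (y : F) : IsFlatAt 𝕜 (fun x => fderiv 𝕜 f (x, y) (v, 0)) x₀ := by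
      simpa [fderiv_comp_prodMk_left (hf.differentiable (by simp) _)] using
        (h y).fderiv_apply_const (hf.comp (contDiff_prodMk_left y)) v
    simpa only [fderiv_fderiv_apply_prodMk_left (contDiff_infty.1 hf 2)] using
      ih (contDiff_infty_fderiv_apply_const hf (v, 0)) hpartial

theorem isFlatAt_of_isFlatAt_prodMk_left {f : E × F → G} {x₀ : E} (hf : ContDiff 𝕜 ∞ f)
    (h : ∀ y, IsFlatAt 𝕜 (fun x => f (x, y)) x₀) (y : F) : IsFlatAt 𝕜 f (x₀, y) := by
  intro n
  induction n generalizing f with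
  | zero =>
    ext1
    exact (h y).eq_zero
  | succ n ih =>
    rw [iteratedFDeriv_succ_eq_zero_iff (contDiff_infty.1 hf (n + 1))]
    exact fun w => ih (contDiff_infty_fderiv_apply_const hf w) fun y =>
      isFlatAt_fderiv_apply_prodMk_left hf h y w

end Slices

theorem boundary_conditions_of_Bv_general {𝕜 F G : Type*} [RCLike 𝕜]
    [NormedAddCommGroup F] [NormedSpace 𝕜 F] [NormedAddCommGroup G] [NormedSpace 𝕜 G]
    {v : 𝕜 → F → G} {φ : 𝕜 → F} {s : Set 𝕜}
    (hv : ContDiff 𝕜 ∞ (fun p : 𝕜 × F => v p.1 p.2)) (hφ : ContDiff 𝕜 ∞ φ)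
    (hbc : ∀ j : ℕ, ∀ x₀ ∈ s, ∀ y : F, iteratedDeriv j (fun x => v x y) x₀ = 0) :
    ContDiff 𝕜 ∞ (fun x => v x (φ x)) ∧
      ∀ j : ℕ, ∀ x₀ ∈ s, iteratedDeriv j (fun x => v x (φ x)) x₀ = 0 := by
  have hgraph : ContDiff 𝕜 ∞ (fun x => (x, φ x)) := contDiff_id.prodMk hφ
  refine ⟨hv.comp hgraph, fun j x₀ hx₀ => ?_⟩
  have hslice (y : F) : IsFlatAt 𝕜 (fun x => v x y) x₀ :=
    isFlatAt_iff_iteratedDeriv_eq_zero.2 fun i => hbc i x₀ hx₀ y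
  have hflat : IsFlatAt 𝕜 (fun p : 𝕜 × F => v p.1 p.2) (x₀, φ x₀) :=
    isFlatAt_of_isFlatAt_prodMk_left hv hslice (φ x₀)
  exact isFlatAt_iff_iteratedDeriv_eq_zero.1
    (hflat.comp (f := fun x => (x, φ x)) hv.contDiffAt hgraph.contDiffAt) j

/-- **Boundary Conditions of Bv.** If `v ∈ C₀^∞(Ω♯; C^∞(Ω¹))`, i.e. `v` is
smooth, 1-periodic in its second argument, and all its derivatives in the first
variable vanish when the first argument is `0` or `1`, then
`Bv : x ↦ v(x, x/ε − 1/2)` is smooth and all its derivatives vanish at `0` and `1`. -/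
theorem boundary_conditions_of_Bv (N : ℕ) (hN : 0 < N) (v : ℝ → ℝ → ℝ)
    (hsmooth : ContDiff ℝ (⊤ : ℕ∞) (fun p : ℝ × ℝ => v p.1 p.2))
    (hper : ∀ x y : ℝ, v x (y + 1) = v x y)
    (hbc : ∀ j : ℕ, ∀ xs ∈ ({0, 1} : Set ℝ), ∀ y : ℝ,
      iteratedDeriv j (fun x => v x y) xs = 0) :
    ContDiff ℝ (⊤ : ℕ∞) (smoothAdj N v) ∧
    ∀ j : ℕ, iteratedDeriv j (smoothAdj N v) 0 = 0 ∧
      iteratedDeriv j (smoothAdj N v) 1 = 0 := by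
  have hB := boundary_conditions_of_Bv_general hsmooth
    (φ := fun x => x / (1 / (N : ℝ)) - 1 / 2) (by fun_prop) hbc
  exact ⟨hB.1, fun j => ⟨hB.2 j 0 (by simp), hB.2 j 1 (by simp)⟩⟩
end

section
/- Let v : ℝ × ℝ → ℝ be continuous and 1-periodic in its second argument, and suppose the partial derivative ∂₁v with respect to the first argument exists and is continuous on ℝ × ℝ. For each positive integer N (with ε = 1/N) define, for x ∈ (0,1), R_N(x) = (T*v)(x) − (Bv)(x) + ε · (x/ε − ⌊x/ε⌋ − 1/2) · (∂₁v)(x, x/ε − 1/2). Then N · ‖R_N‖_{L²(0,1)} → 0 as N → ∞. (This is the approximation T*v = Bv − ε B(x¹ ∂v/∂x♯) + ε O_s(ε), where O_s(ε) tends to zero strongly in L².) -/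
open Set MeasureTheory Filter

/-!
On the closed cell of length `ε` containing `x`, a first order Taylor expansion at `x` of
`s ↦ v(s, y)`, with `y = x/ε − ⌊x/ε⌋ − 1/2`, has error at most `η ε`, where `η` is the oscillation
of `∂₁v(·, y)` over the cell. Averaging it over the cell produces the correction term, because the
average of `s - x` is the signed distance `-ε y` from `x` to the centre of the cell. Finally
`η → 0` as `ε → 0`, since `∂₁v` is uniformly continuous on compact sets.
-/

section Average

variable {E : Type*} [NormedAddCommGroup E] [NormedSpace ℝ E] {f f' : ℝ → E} {c : E} {η a b x : ℝ}

theorem norm_sub_sub_smul_le_of_hasDerivWithinAt {s : Set ℝ} {t : ℝ} (hs : Convex ℝ s)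
    (hf : ∀ r ∈ s, HasDerivWithinAt f (f' r) s r) (hη : ∀ r ∈ s, ‖f' r - c‖ ≤ η)
    (hx : x ∈ s) (ht : t ∈ s) : ‖f t - f x - (t - x) • c‖ ≤ η * |t - x| := by
  have hg : ∀ r ∈ s, HasDerivWithinAt (fun r => f r - r • c) (f' r - c) s r := fun r hr =>
    (hf r hr).fun_sub (by simpa only [id_eq, one_smul] using (hasDerivWithinAt_id r s).smul_const c)
  calc ‖f t - f x - (t - x) • c‖ = ‖f t - t • c - (f x - x • c)‖ := by
        rw [sub_smul, sub_sub_sub_comm]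
    _ ≤ η * |t - x| := hs.norm_image_sub_le_of_norm_hasDerivWithin_le hg hη hx ht

theorem interval_average_sub_sub_smul [CompleteSpace E] (hab : a ≠ b)
    (hf : IntervalIntegrable f volume a b) {d : E} :
    ⨍ t in a..b, (f t - d - (t - x) • c) = (⨍ t in a..b, f t) - d - ((a + b) / 2 - x) • c := by
  have hba : b - a ≠ 0 := sub_ne_zero.2 hab.symm
  have hmean : (b - a)⁻¹ * ∫ t in a..b, (t - x) = (a + b) / 2 - x := by
    simp only [intervalIntegral.integral_sub, intervalIntegral.intervalIntegrable_id,
      intervalIntegrable_const, integral_id, intervalIntegral.integral_const, smul_eq_mul]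
    field_simp
    ring
  have hlin : IntervalIntegrable (fun t => (t - x) • c) volume a b :=
    Continuous.intervalIntegrable (by fun_prop) a b
  simp only [interval_average_eq]
  rw [intervalIntegral.integral_sub (hf.sub intervalIntegrable_const) hlin,
    intervalIntegral.integral_sub hf intervalIntegrable_const, intervalIntegral.integral_const,
    intervalIntegral.integral_smul_const, smul_sub, smul_sub, inv_smul_smul₀ hba, smul_smul, hmean]

theorem norm_interval_average_le_of_norm_le_const {C : ℝ} (hab : a ≠ b)
    (hC : ∀ t ∈ uIoc a b, ‖f t‖ ≤ C) : ‖⨍ t in a..b, f t‖ ≤ C := by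
  have hba : 0 < |b - a| := abs_sub_pos.2 hab.symm
  rw [interval_average_eq, norm_smul, norm_inv, Real.norm_eq_abs, inv_mul_le_iff₀ hba, mul_comm]
  exact intervalIntegral.norm_integral_le_of_norm_le_const hC

theorem norm_interval_average_sub_sub_smul_le [CompleteSpace E] (hab : a < b)
    (hx : x ∈ Icc a b) (hf : ∀ t ∈ Icc a b, HasDerivWithinAt f (f' t) (Icc a b) t)
    (hη : ∀ t ∈ Icc a b, ‖f' t - c‖ ≤ η) :
    ‖(⨍ t in a..b, f t) - f x - ((a + b) / 2 - x) • c‖ ≤ η * (b - a) := by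
  have hint : IntervalIntegrable f volume a b :=
    ContinuousOn.intervalIntegrable_of_Icc hab.le fun t ht => (hf t ht).continuousWithinAt
  rw [← interval_average_sub_sub_smul hab.ne hint]
  refine norm_interval_average_le_of_norm_le_const hab.ne fun t htab => ?_
  have ht : t ∈ Icc a b := Ioc_subset_Icc_self (uIoc_of_le hab.le ▸ htab)
  have hη₀ : 0 ≤ η := (norm_nonneg _).trans (hη x hx)
  calc ‖f t - f x - (t - x) • c‖ ≤ η * |t - x| :=
        norm_sub_sub_smul_le_of_hasDerivWithinAt (convex_Icc a b) hf hη hx ht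
    _ ≤ η * (b - a) := by gcongr; exact abs_sub_le_of_le_of_le ht.1 ht.2 hx.1 hx.2

end Average

section Cell

variable {N : ℕ} {x : ℝ} {v v₁ : ℝ → ℝ → ℝ}

/-- The closed cell `[⌊x/ε⌋ε, (⌊x/ε⌋ + 1)ε]` of length `ε = 1/N` that contains `x`. -/
def twoScaleCell (N : ℕ) (x : ℝ) : Set ℝ :=
  Icc (⌊x * N⌋ / N : ℝ) ((⌊x * N⌋ + 1) / N)

/-- The position `x¹ = (x - x_c)/ε` of `x` relative to the centre `x_c` of its cell, rescaled to
the unit cell, for `ε = 1/N`. -/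
noncomputable def twoScaleCoord (N : ℕ) (x : ℝ) : ℝ :=
  Int.fract (x * N) - 1 / 2

/-- The remainder `R_N = T*v − Bv + ε B(x¹ v₁)`, `ε = 1/N`, where `v₁` stands for `∂₁v`. -/
noncomputable def twoScaleRemainder (N : ℕ) (v v₁ : ℝ → ℝ → ℝ) (x : ℝ) : ℝ :=
  twoScaleAdj N v x - smoothAdj N v x
    + (1 / (N : ℝ)) * (x / (1 / (N : ℝ)) - (⌊x / (1 / (N : ℝ))⌋ : ℝ) - 1 / 2)
      * v₁ x (x / (1 / (N : ℝ)) - 1 / 2)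

theorem twoScaleCoord_mem_Icc (N : ℕ) (x : ℝ) : twoScaleCoord N x ∈ Icc (-1 / 2 : ℝ) (1 / 2) := by
  have h₀ := Int.fract_nonneg (x * N)
  have h₁ := Int.fract_lt_one (x * N)
  constructor <;> unfold twoScaleCoord <;> linarith

theorem mem_twoScaleCell (hN : 0 < N) : x ∈ twoScaleCell N x := by
  have hN' : (0 : ℝ) < N := Nat.cast_pos.2 hN
  exact ⟨(div_le_iff₀ hN').2 (Int.floor_le _), (le_div_iff₀ hN').2 (Int.lt_floor_add_one _).le⟩

theorem twoScaleCell_subset_Icc (hN : 0 < N) (hx : x ∈ Ico (0 : ℝ) 1) :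
    twoScaleCell N x ⊆ Icc 0 1 := by
  have hN' : (0 : ℝ) < N := Nat.cast_pos.2 hN
  have hfloor₀ : 0 ≤ ⌊x * N⌋ := Int.floor_nonneg.2 (mul_nonneg hx.1 hN'.le)
  have hfloor₁ : ⌊x * N⌋ + 1 ≤ (N : ℤ) :=
    Int.add_one_le_of_lt (Int.floor_lt.2 (by exact_mod_cast mul_lt_of_lt_one_left hN' hx.2))
  refine Icc_subset_Icc (div_nonneg (mod_cast hfloor₀) hN'.le) ((div_le_one hN').2 ?_)
  exact_mod_cast hfloor₁

theorem abs_sub_le_of_mem_twoScaleCell (hN : 0 < N) {s : ℝ} (hs : s ∈ twoScaleCell N x) :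
    |s - x| ≤ 1 / N := by
  obtain ⟨hx₀, hx₁⟩ := mem_twoScaleCell (x := x) hN
  calc |s - x| ≤ (⌊x * N⌋ + 1) / N - ⌊x * N⌋ / N := abs_sub_le_of_le_of_le hs.1 hs.2 hx₀ hx₁
    _ = 1 / N := by ring

theorem twoScaleAdj_eq_average (N : ℕ) (v : ℝ → ℝ → ℝ) (x : ℝ) :
    twoScaleAdj N v x =
      ⨍ s in (⌊x * N⌋ / N : ℝ)..((⌊x * N⌋ + 1) / N), v s (twoScaleCoord N x) := by
  rw [interval_average_eq, ← sub_div, add_sub_cancel_left, smul_eq_mul, inv_div, div_one]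
  simp only [twoScaleAdj, twoScaleCoord, Int.fract, one_div, div_inv_eq_mul, inv_mul_eq_div,
    one_mul]

theorem apply_sub_half_eq_of_periodic {α : Type*} {g : ℝ → α} (hg : Function.Periodic g 1)
    (N : ℕ) (x : ℝ) : g (x / (1 / (N : ℝ)) - 1 / 2) = g (twoScaleCoord N x) := by
  rw [div_div_eq_mul_div, div_one, ← hg.sub_int_mul_eq ⌊x * N⌋, mul_one, sub_right_comm]
  rfl

theorem twoScaleRemainder_eq (hN : 0 < N) (hv : Function.Periodic (v x) 1)
    (hv₁ : Function.Periodic (v₁ x) 1) :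
    twoScaleRemainder N v v₁ x =
      (⨍ s in (⌊x * N⌋ / N : ℝ)..((⌊x * N⌋ + 1) / N), v s (twoScaleCoord N x))
        - v x (twoScaleCoord N x)
        - ((⌊x * N⌋ / N + (⌊x * N⌋ + 1) / N) / 2 - x) • v₁ x (twoScaleCoord N x) := by
  have hN' : (N : ℝ) ≠ 0 := Nat.cast_ne_zero.2 hN.ne'
  have hcentre : (1 / N : ℝ) * (x / (1 / (N : ℝ)) - ⌊x / (1 / (N : ℝ))⌋ - 1 / 2)
      = -((⌊x * N⌋ / N + (⌊x * N⌋ + 1) / N) / 2 - x) := by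
    rw [div_div_eq_mul_div, div_one]
    field_simp
    ring
  rw [twoScaleRemainder, smoothAdj, twoScaleAdj_eq_average, apply_sub_half_eq_of_periodic hv,
    apply_sub_half_eq_of_periodic hv₁, hcentre, neg_mul, ← sub_eq_add_neg, smul_eq_mul]

theorem abs_natCast_mul_twoScaleRemainder_le {η : ℝ} (hN : 0 < N)
    (hv : Function.Periodic (v x) 1) (hv₁ : Function.Periodic (v₁ x) 1)
    (hd : ∀ s ∈ twoScaleCell N x, HasDerivWithinAt (fun s => v s (twoScaleCoord N x))
      (v₁ s (twoScaleCoord N x)) (twoScaleCell N x) s)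
    (hη : ∀ s ∈ twoScaleCell N x, |v₁ s (twoScaleCoord N x) - v₁ x (twoScaleCoord N x)| ≤ η) :
    |N * twoScaleRemainder N v v₁ x| ≤ η := by
  have hN' : (0 : ℝ) < N := Nat.cast_pos.2 hN
  have hcell : (⌊x * N⌋ / N : ℝ) < (⌊x * N⌋ + 1) / N :=
    (div_lt_div_iff_of_pos_right hN').2 (lt_add_one _)
  have hbound := norm_interval_average_sub_sub_smul_le hcell (mem_twoScaleCell hN) hd hη
  rw [← twoScaleRemainder_eq hN hv hv₁, Real.norm_eq_abs] at hbound
  calc |N * twoScaleRemainder N v v₁ x| = N * |twoScaleRemainder N v v₁ x| := by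
        rw [abs_mul, Nat.abs_cast]
    _ ≤ N * (η * ((⌊x * N⌋ + 1) / N - ⌊x * N⌋ / N)) := by gcongr
    _ = η := by field_simp; ring

end Cell

theorem periodic_of_hasDerivWithinAt {X E : Type*} [Add X] [NormedAddCommGroup E]
    [NormedSpace ℝ E] {s : Set ℝ} {v v₁ : ℝ → X → E} {p : X} {x : ℝ} (hs : UniqueDiffWithinAt ℝ s x)
    (hx : x ∈ s) (hv : ∀ t ∈ s, Function.Periodic (v t) p)
    (hd : ∀ y, HasDerivWithinAt (fun t => v t y) (v₁ x y) s x) :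
    Function.Periodic (v₁ x) p := fun y =>
  hs.eq_deriv s ((hd (y + p)).congr (fun t ht => (hv t ht y).symm) (hv x hx y).symm) (hd y)

section MeanSquare

variable {α ι : Type*} [MeasurableSpace α] {μ : Measure α} {s : Set α} {l : Filter ι}

theorem mul_sqrt_setIntegral_sq {c : ℝ} (hc : 0 ≤ c) (f : α → ℝ) :
    c * √(∫ x in s, f x ^ 2 ∂μ) = √(∫ x in s, (c * f x) ^ 2 ∂μ) := by
  simp only [mul_pow, integral_const_mul]
  rw [Real.sqrt_mul (sq_nonneg c), Real.sqrt_sq hc]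

theorem sqrt_setIntegral_sq_le (hs : μ s < ⊤) {f : α → ℝ} {C : ℝ} (hC₀ : 0 ≤ C)
    (hC : ∀ x ∈ s, |f x| ≤ C) : √(∫ x in s, f x ^ 2 ∂μ) ≤ C * √(μ.real s) := by
  have hsq : ∀ x ∈ s, ‖f x ^ 2‖ ≤ C ^ 2 := fun x hx => by
    rw [norm_pow]
    exact pow_le_pow_left₀ (abs_nonneg _) (hC x hx) 2
  calc √(∫ x in s, f x ^ 2 ∂μ) ≤ √(C ^ 2 * μ.real s) :=
        Real.sqrt_le_sqrt ((le_abs_self _).trans (norm_setIntegral_le_of_norm_le_const hs hsq))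
    _ = C * √(μ.real s) := by rw [Real.sqrt_mul (sq_nonneg C), Real.sqrt_sq hC₀]

theorem tendsto_sqrt_setIntegral_sq_of_tendstoUniformlyOn (hs : μ s < ⊤) {F : ι → α → ℝ}
    (hF : TendstoUniformlyOn F 0 l s) :
    Tendsto (fun i => √(∫ x in s, F i x ^ 2 ∂μ)) l (nhds 0) := by
  refine Metric.tendsto_nhds.2 fun η hη => ?_
  have hden : 0 < √(μ.real s) + 1 := by positivity
  filter_upwards [Metric.tendstoUniformlyOn_iff.1 hF (η / (√(μ.real s) + 1)) (by positivity)]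
    with i hi
  rw [Real.dist_0_eq_abs, abs_of_nonneg (Real.sqrt_nonneg _)]
  calc √(∫ x in s, F i x ^ 2 ∂μ) ≤ η / (√(μ.real s) + 1) * √(μ.real s) :=
        sqrt_setIntegral_sq_le hs (by positivity) fun x hx => by
          simpa only [Pi.zero_apply, dist_zero_left, Real.norm_eq_abs] using (hi x hx).le
    _ < η / (√(μ.real s) + 1) * (√(μ.real s) + 1) := by gcongr; exact lt_add_one _
    _ = η := div_mul_cancel₀ η hden.ne'

theorem tendsto_mul_sqrt_setIntegral_sq_of_tendstoUniformlyOn (hs : μ s < ⊤) {c : ι → ℝ}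
    (hc : ∀ i, 0 ≤ c i) {f : ι → α → ℝ}
    (hf : TendstoUniformlyOn (fun i x => c i * f i x) 0 l s) :
    Tendsto (fun i => c i * √(∫ x in s, f i x ^ 2 ∂μ)) l (nhds 0) := by
  simpa only [mul_sqrt_setIntegral_sq (hc _)] using
    tendsto_sqrt_setIntegral_sq_of_tendstoUniformlyOn hs hf

end MeanSquare

theorem approximation_Tstar_by_B_general {v v₁ : ℝ → ℝ → ℝ}
    (hper : ∀ x ∈ Icc (0 : ℝ) 1, Function.Periodic (v x) 1)
    (hd : ∀ x ∈ Icc (0 : ℝ) 1, ∀ y,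
      HasDerivWithinAt (fun s => v s y) (v₁ x y) (Icc 0 1) x)
    (hv₁ : ContinuousOn (fun p : ℝ × ℝ => v₁ p.1 p.2) (Icc 0 1 ×ˢ univ)) :
    TendstoUniformlyOn (fun (N : ℕ) x => N * twoScaleRemainder N v v₁ x) 0 atTop
      (Ico 0 1) := by
  have hcompact : IsCompact (Icc (0 : ℝ) 1 ×ˢ Icc (-1 / 2 : ℝ) (1 / 2)) :=
    isCompact_Icc.prod isCompact_Icc
  have huniform := hcompact.uniformContinuousOn_of_continuous
    (hv₁.mono (prod_mono_right (subset_univ _)))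
  refine Metric.tendstoUniformlyOn_iff.2 fun κ hκ => ?_
  obtain ⟨η, hη, hηκ⟩ := exists_between hκ
  obtain ⟨δ, hδ, hclose⟩ := Metric.uniformContinuousOn_iff.1 huniform η hη
  filter_upwards [eventually_gt_atTop 0,
    tendsto_one_div_atTop_nhds_zero_nat.eventually (gt_mem_nhds hδ)] with N hN hNδ x hx
  have hx' : x ∈ Icc (0 : ℝ) 1 := Ico_subset_Icc_self hx
  have hcell := twoScaleCell_subset_Icc hN hx
  have hosc : ∀ s ∈ twoScaleCell N x,
      |v₁ s (twoScaleCoord N x) - v₁ x (twoScaleCoord N x)| ≤ η := fun s hs => by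
    refine (hclose (s, _) ⟨hcell hs, twoScaleCoord_mem_Icc N x⟩
      (x, _) ⟨hx', twoScaleCoord_mem_Icc N x⟩ ?_).le
    rw [dist_prod_same_right, Real.dist_eq]
    exact (abs_sub_le_of_mem_twoScaleCell hN hs).trans_lt hNδ
  have hper₁ : Function.Periodic (v₁ x) 1 :=
    periodic_of_hasDerivWithinAt (uniqueDiffOn_Icc_zero_one x hx') hx' hper (hd x hx')
  rw [Pi.zero_apply, dist_zero_left, Real.norm_eq_abs]
  exact (abs_natCast_mul_twoScaleRemainder_le hN (hper x hx') hper₁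
    (fun s hs => (hd s (hcell hs) _).mono hcell) hosc).trans_lt hηκ

/-- **Approximation of T\* by B.** If `v` is continuous, 1-periodic in its
second argument, and has a continuous partial derivative `v₁ = ∂₁v` in the
first argument, then `T*v = Bv − ε B(x¹ ∂v/∂x♯) + ε O_s(ε)`: the remainder
`R_N = T*v − Bv + ε (x/ε − ⌊x/ε⌋ − 1/2) ∂₁v(x, x/ε − 1/2)` satisfies
`N ‖R_N‖_{L²(0,1)} → 0`. -/
theorem approximation_Tstar_by_B (v v₁ : ℝ → ℝ → ℝ)
    (hv : Continuous (fun p : ℝ × ℝ => v p.1 p.2))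
    (hper : ∀ x y : ℝ, v x (y + 1) = v x y)
    (hd : ∀ x y : ℝ, HasDerivAt (fun s => v s y) (v₁ x y) x)
    (hv₁ : Continuous (fun p : ℝ × ℝ => v₁ p.1 p.2)) :
    Tendsto (fun N : ℕ => (N : ℝ) *
        Real.sqrt (∫ x in Ioo (0 : ℝ) 1,
          (twoScaleAdj N v x - smoothAdj N v x
            + (1 / (N : ℝ)) * (x / (1 / (N : ℝ)) - (⌊x / (1 / (N : ℝ))⌋ : ℝ) - 1 / 2)
              * v₁ x (x / (1 / (N : ℝ)) - 1 / 2)) ^ 2))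
      atTop (nhds 0) := by
  exact tendsto_mul_sqrt_setIntegral_sq_of_tendstoUniformlyOn measure_Ioo_lt_top Nat.cast_nonneg
    ((approximation_Tstar_by_B_general (fun x _ => hper x)
      (fun x _ y => (hd x y).hasDerivWithinAt) hv₁.continuousOn).mono Ioo_subset_Ico_self)
end

section
/- The function θ¹ is continuously differentiable with (θ¹)'(y) = h/a⁰(y) − 1, it is 1-periodic (θ¹(y+1) = θ¹(y) for all y ∈ ℝ), and for every continuously differentiable 1-periodic function w : ℝ → ℝ one has ∫_{−1/2}^{1/2} a⁰(y) (θ¹)'(y) w'(y) dy = − ∫_{−1/2}^{1/2} a⁰(y) w'(y) dy. In particular, the microscopic (cell) problem with μ = 1 admits a periodic solution. (Existence part of the proposition on the linear operator associated to the microscopic problem, with the explicit one-dimensional solution.) -/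
open Set MeasureTheory intervalIntegral

/-- The harmonic mean `h = (∫_{-1/2}^{1/2} 1/a⁰)⁻¹` of `a⁰` over the unit cell. -/
noncomputable def harmMean (a : ℝ → ℝ) : ℝ :=
  (∫ y in (-(1 / 2) : ℝ)..(1 / 2), 1 / a y)⁻¹

/-- The cell corrector `θ¹(y) = ∫₀^y (h/a⁰(s) − 1) ds`. -/
noncomputable def theta1 (a : ℝ → ℝ) (y : ℝ) : ℝ :=
  ∫ s in (0 : ℝ)..y, (harmMean a / a s - 1)

/-!
The harmonic mean `h` is chosen so that `h / a⁰ - 1` has mean zero over the cell, hence its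
antiderivative `θ¹` is periodic. The total flux `a⁰ ((θ¹)' + 1) = h` is constant, and a constant is
orthogonal to the derivative of every function taking the same value at both ends of the cell.
-/

theorem intervalIntegral_ne_zero_of_continuousOn {f : ℝ → ℝ} {s t : ℝ} (hst : s ≠ t)
    (hf : ContinuousOn f (uIcc s t)) (hne : ∀ y ∈ uIcc s t, f y ≠ 0) :
    ∫ y in s..t, f y ≠ 0 := by
  intro hzero
  obtain ⟨c, hc, hfc⟩ := exists_eq_interval_average hst hf
  refine hne c (uIoo_subset_uIcc_self hc) ?_
  rw [hfc, interval_average_eq, hzero, smul_zero]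

theorem periodic_intervalIntegral_of_integral_eq_zero {E : Type*} [NormedAddCommGroup E]
    [NormedSpace ℝ E] {f : ℝ → E} {T : ℝ} (hf : Function.Periodic f T)
    (hint : ∀ s t, IntervalIntegrable f volume s t) {c : ℝ}
    (hmean : ∫ x in c..c + T, f x = 0) (b : ℝ) :
    Function.Periodic (fun y => ∫ x in b..y, f x) T := fun y => by
  dsimp only
  rw [hf.intervalIntegral_add_eq_add b y hint, hf.intervalIntegral_add_eq b c, hmean, add_zero]

theorem integral_const_sub_mul_deriv {a w : ℝ → ℝ} {s t : ℝ} (c : ℝ)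
    (ha : ContinuousOn a (uIcc s t)) (hw : AbsolutelyContinuousOnInterval w s t)
    (hst : w t = w s) :
    ∫ y in s..t, (c - a y) * deriv w y = -∫ y in s..t, a y * deriv w y := by
  have hw_int := hw.intervalIntegrable_deriv
  calc ∫ y in s..t, (c - a y) * deriv w y
      = c * (∫ y in s..t, deriv w y) - ∫ y in s..t, a y * deriv w y := by
        simp only [sub_mul]
        rw [integral_sub (hw_int.const_mul c) (hw_int.continuousOn_mul ha),
          intervalIntegral.integral_const_mul]
    _ = -∫ y in s..t, a y * deriv w y := by
        rw [hw.integral_deriv_eq_sub, hst, sub_self, mul_zero, zero_sub]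

section Corrector

variable {a : ℝ → ℝ}

theorem integral_harmMean_div (h : ∫ y in (-(1 / 2) : ℝ)..(1 / 2), 1 / a y ≠ 0) :
    ∫ y in (-(1 / 2) : ℝ)..(1 / 2), harmMean a / a y = 1 := by
  simp only [div_eq_mul_one_div (harmMean a)]
  rw [intervalIntegral.integral_const_mul, harmMean, inv_mul_cancel₀ h]

theorem continuous_harmMean_div_sub_one (ha : Continuous a) (hne : ∀ y, a y ≠ 0) :
    Continuous fun y => harmMean a / a y - 1 :=
  (continuous_const.div ha hne).sub continuous_const

theorem hasDerivAt_theta1 (ha : Continuous a) (hne : ∀ y, a y ≠ 0) (y : ℝ) :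
    HasDerivAt (theta1 a) (harmMean a / a y - 1) y :=
  ((continuous_harmMean_div_sub_one ha hne).integral_hasStrictDerivAt 0 y).hasDerivAt

theorem deriv_theta1 (ha : Continuous a) (hne : ∀ y, a y ≠ 0) :
    deriv (theta1 a) = fun y => harmMean a / a y - 1 :=
  deriv_eq (hasDerivAt_theta1 ha hne)

theorem contDiff_theta1 (ha : Continuous a) (hne : ∀ y, a y ≠ 0) : ContDiff ℝ 1 (theta1 a) := by
  rw [contDiff_one_iff_deriv, deriv_theta1 ha hne]
  exact ⟨fun y => (hasDerivAt_theta1 ha hne y).differentiableAt,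
    continuous_harmMean_div_sub_one ha hne⟩

theorem mul_deriv_theta1 (ha : Continuous a) (hne : ∀ y, a y ≠ 0) (y : ℝ) :
    a y * deriv (theta1 a) y = harmMean a - a y := by
  rw [deriv_theta1 ha hne, mul_sub_one, mul_div_cancel₀ _ (hne y)]

theorem integral_harmMean_div_sub_one (ha : Continuous a) (hne : ∀ y, a y ≠ 0) :
    ∫ y in (-(1 / 2) : ℝ)..(1 / 2), (harmMean a / a y - 1) = 0 := by
  have hcont : Continuous fun y => 1 / a y := continuous_const.div ha hne
  have hinv : ∫ y in (-(1 / 2) : ℝ)..(1 / 2), 1 / a y ≠ 0 :=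
    intervalIntegral_ne_zero_of_continuousOn (by norm_num) hcont.continuousOn
      fun y _ => one_div_ne_zero (hne y)
  have hint : IntervalIntegrable (fun y => harmMean a / a y) volume (-(1 / 2)) (1 / 2) :=
    (continuous_const.div ha hne).intervalIntegrable _ _
  rw [integral_sub hint intervalIntegrable_const, integral_harmMean_div hinv]
  norm_num

theorem periodic_theta1 (ha : Continuous a) (hper : Function.Periodic a 1)
    (hne : ∀ y, a y ≠ 0) : Function.Periodic (theta1 a) 1 := by
  have hmean : ∫ y in (-(1 / 2) : ℝ)..(-(1 / 2) + 1), (harmMean a / a y - 1) = 0 := by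
    rw [show (-(1 / 2) + 1 : ℝ) = 1 / 2 by norm_num, integral_harmMean_div_sub_one ha hne]
  exact periodic_intervalIntegral_of_integral_eq_zero (hper.comp fun x => harmMean a / x - 1)
    (continuous_harmMean_div_sub_one ha hne).intervalIntegrable hmean 0

end Corrector

theorem microscopic_problem_existence_general {a : ℝ → ℝ} (ha : Continuous a)
    (hper : Function.Periodic a 1) (hne : ∀ y, a y ≠ 0) :
    ContDiff ℝ 1 (theta1 a) ∧
    (∀ y, deriv (theta1 a) y = harmMean a / a y - 1) ∧
    Function.Periodic (theta1 a) 1 ∧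
    ∀ w : ℝ → ℝ, AbsolutelyContinuousOnInterval w (-(1 / 2)) (1 / 2) → w (1 / 2) = w (-(1 / 2)) →
      ∫ y in (-(1 / 2) : ℝ)..(1 / 2), a y * deriv (theta1 a) y * deriv w y
        = -∫ y in (-(1 / 2) : ℝ)..(1 / 2), a y * deriv w y := by
  refine ⟨contDiff_theta1 ha hne, congrFun (deriv_theta1 ha hne), periodic_theta1 ha hper hne,
    fun w hw hends => ?_⟩
  simp only [mul_deriv_theta1 ha hne]
  exact integral_const_sub_mul_deriv (harmMean a) ha.continuousOn hw hends

/-- **Microscopic problem, existence.** With `a⁰` continuous, 1-periodic and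
bounded as `0 < α ≤ a⁰ ≤ β`, the function `θ¹` is continuously differentiable
with `(θ¹)'(y) = h/a⁰(y) − 1`, it is 1-periodic, and it solves the cell problem
with `μ = 1`: `∫ a⁰ (θ¹)' w' = −∫ a⁰ w'` for every `C¹` 1-periodic `w`. -/
theorem microscopic_problem_existence (a : ℝ → ℝ) (α β : ℝ)
    (ha : Continuous a) (haper : ∀ y, a (y + 1) = a y)
    (hα : 0 < α) (hαβ : α ≤ β) (hbound : ∀ y, α ≤ a y ∧ a y ≤ β) :
    ContDiff ℝ 1 (theta1 a) ∧
    (∀ y, deriv (theta1 a) y = harmMean a / a y - 1) ∧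
    (∀ y, theta1 a (y + 1) = theta1 a y) ∧
    ∀ w : ℝ → ℝ, ContDiff ℝ 1 w → (∀ y, w (y + 1) = w y) →
      ∫ y in (-(1 / 2) : ℝ)..(1 / 2), a y * deriv (theta1 a) y * deriv w y
        = -∫ y in (-(1 / 2) : ℝ)..(1 / 2), a y * deriv w y := by
  have ⟨hC1, hderiv, hθper, hweak⟩ :=
    microscopic_problem_existence_general ha haper fun y => (hα.trans_le (hbound y).1).ne'
  exact ⟨hC1, hderiv, hθper, fun w hw hwper =>
    hweak w hw.contDiffOn.absolutelyContinuousOnInterval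
      (by convert hwper (-(1 / 2)) using 2; norm_num)⟩
end

section
/- Let μ ∈ ℝ and let φ : ℝ → ℝ be continuously differentiable and 1-periodic, and suppose that for every infinitely differentiable 1-periodic function w : ℝ → ℝ one has ∫_{−1/2}^{1/2} a⁰(y) φ'(y) w'(y) dy = − μ ∫_{−1/2}^{1/2} a⁰(y) w'(y) dy. Then φ'(y) = μ · (h/a⁰(y) − 1) for all y ∈ ℝ. In particular the derivative of a periodic solution of the microscopic problem is unique and depends linearly on μ: φ' = μ (θ¹)'. (Uniqueness and linearity in the proposition on the linear operator associated to the microscopic problem.) -/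
/-!
The weak equation says that the flux `a (φ' + μ)` is orthogonal to the derivatives of all smooth
periodic functions. Each character `fourier n` with `n ≠ 0` is the derivative of a multiple of
itself, so the flux has no non-constant Fourier mode and equals a constant `c`. Hence
`φ' = c / a - μ`, and since `φ'` has mean zero over a period, `c = μ h`.
-/

open Set MeasureTheory intervalIntegral

section Periodic

variable {E : Type*} [NormedAddCommGroup E] [NormedSpace ℝ E] {T : ℝ}

lemma periodic_deriv {f : ℝ → E} (hf : f.Periodic T) : (deriv f).Periodic T := fun x ↦ by
  rw [← deriv_comp_add_const, hf.funext]

variable [CompleteSpace E]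

lemma integral_deriv_eq_zero_of_periodic {f : ℝ → E} (hf : ContDiff ℝ 1 f) (hper : f.Periodic T)
    (t : ℝ) : ∫ y in t..t + T, deriv f y = 0 := by
  rw [integral_deriv_eq_sub (fun y _ ↦ hf.differentiable one_ne_zero y)
    ((hf.continuous_deriv le_rfl).intervalIntegrable _ _), hper, sub_self]

lemma integral_smul_deriv_eq_zero_of_forall_real {g : ℝ → ℝ} {s t : ℝ}
    (hg : IntervalIntegrable g volume s t)
    (horth : ∀ v : ℝ → ℝ, ContDiff ℝ (⊤ : ℕ∞) v → v.Periodic T →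
      ∫ y in s..t, g y * deriv v y = 0)
    {w : ℝ → E} (hw : ContDiff ℝ (⊤ : ℕ∞) w) (hper : w.Periodic T) :
    ∫ y in s..t, g y • deriv w y = 0 := by
  have hint : IntervalIntegrable (fun y ↦ g y • deriv w y) volume s t :=
    hg.smul_continuousOn (hw.continuous_deriv (by simp)).continuousOn
  refine SeparatingDual.eq_zero_of_forall_dual_eq_zero (R := ℝ) fun L ↦ ?_
  have hderiv (y : ℝ) : deriv (L ∘ w) y = L (deriv w y) :=
    (L.hasFDerivAt.comp_hasDerivAt y (hw.differentiable (by simp) y).hasDerivAt).deriv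
  calc L (∫ y in s..t, g y • deriv w y)
      = ∫ y in s..t, g y * deriv (L ∘ w) y := by
        simp_rw [← L.intervalIntegral_comp_comm hint, map_smul, smul_eq_mul, hderiv]
    _ = 0 := horth _ (L.contDiff.comp hw) (hper.comp L)

end Periodic

section Fourier

variable {T : ℝ}

lemma contDiff_fourier_coe {k : WithTop ℕ∞} (n : ℤ) :
    ContDiff ℝ k fun y : ℝ ↦ fourier n (y : AddCircle T) := by
  simp_rw [fourier_coe_apply]
  exact ((contDiff_const.mul Complex.ofRealCLM.contDiff).div_const _).cexp

variable [hT : Fact (0 < T)]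

lemma eq_fourierCoeff_zero_of_fourierCoeff_eq_zero {f : C(AddCircle T, ℂ)}
    (hf : ∀ n ≠ 0, fourierCoeff f n = 0) (x : AddCircle T) : f x = fourierCoeff f 0 := by
  have hseries := has_pointwise_sum_fourier_series_of_summable (hasSum_single 0 hf).summable x
  have hconst := hasSum_single (f := fun n ↦ fourierCoeff f n • fourier n x) 0
    fun n hn ↦ by rw [hf n hn, zero_smul]
  simpa only [fourier_zero, smul_eq_mul, mul_one] using hseries.unique hconst

lemma fourierCoeff_eq_zero_of_integral_deriv_smul_eq_zero {E : Type*} [NormedAddCommGroup E]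
    [NormedSpace ℂ E] {f : AddCircle T → E} {t : ℝ}
    (horth : ∀ w : ℝ → ℂ, ContDiff ℝ (⊤ : ℕ∞) w → w.Periodic T →
      ∫ y in t..t + T, deriv w y • f y = 0) {n : ℤ} (hn : n ≠ 0) :
    fourierCoeff f n = 0 := by
  have hzero := horth
    (fun y ↦ T / (-2 * Real.pi * Complex.I * n) * fourier (-n) (y : AddCircle T))
    (contDiff_const.mul (contDiff_fourier_coe (-n)))
    fun y ↦ by simp only [AddCircle.coe_add_period]
  simp_rw [(has_antideriv_at_fourier_neg hT hn _).deriv] at hzero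
  rw [fourierCoeff_eq_intervalIntegral f n t, hzero, smul_zero]

lemma exists_eq_const_of_integral_mul_deriv_eq_zero {g : ℝ → ℝ} (hg : Continuous g)
    (hper : g.Periodic T) {t : ℝ}
    (horth : ∀ w : ℝ → ℝ, ContDiff ℝ (⊤ : ℕ∞) w → w.Periodic T →
      ∫ y in t..t + T, g y * deriv w y = 0) :
    ∃ c, ∀ y, g y = c := by
  have hperC : (fun y ↦ (g y : ℂ)).Periodic T := hper.comp Complex.ofReal
  let G : C(AddCircle T, ℂ) :=
    ⟨hperC.lift, continuous_coinduced_dom.mpr (Complex.continuous_ofReal.comp hg)⟩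
  have hcoeff (n : ℤ) (hn : n ≠ 0) : fourierCoeff G n = 0 := by
    refine fourierCoeff_eq_zero_of_integral_deriv_smul_eq_zero (t := t) (fun w hw hwper ↦ ?_) hn
    calc ∫ y in t..t + T, deriv w y • G y
        = ∫ y in t..t + T, g y • deriv w y := by
          refine integral_congr fun y _ ↦ ?_
          exact mul_comm (deriv w y) (g y : ℂ)
      _ = 0 := integral_smul_deriv_eq_zero_of_forall_real (hg.intervalIntegrable _ _) horth hw hwper
  exact ⟨(fourierCoeff G 0).re,
    fun y ↦ congrArg Complex.re (eq_fourierCoeff_zero_of_fourierCoeff_eq_zero hcoeff y)⟩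

lemma exists_mul_add_eq_const_of_weak_eq {a u : ℝ → ℝ} {μ t : ℝ} (ha : Continuous a)
    (haper : a.Periodic T) (hu : Continuous u) (huper : u.Periodic T)
    (hweak : ∀ w : ℝ → ℝ, ContDiff ℝ (⊤ : ℕ∞) w → w.Periodic T →
      ∫ y in t..t + T, a y * u y * deriv w y = -(μ * ∫ y in t..t + T, a y * deriv w y)) :
    ∃ c, ∀ y, a y * (u y + μ) = c := by
  refine exists_eq_const_of_integral_mul_deriv_eq_zero (T := T) (t := t) (by fun_prop)
    (fun y ↦ by rw [haper, huper]) fun w hw hwper ↦ ?_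
  have hdw : Continuous (deriv w) := hw.continuous_deriv (by simp)
  have hint : IntervalIntegrable (fun y ↦ a y * u y * deriv w y) volume t (t + T) :=
    ((ha.mul hu).mul hdw).intervalIntegrable _ _
  have hint' : IntervalIntegrable (fun y ↦ a y * deriv w y) volume t (t + T) :=
    (ha.mul hdw).intervalIntegrable _ _
  calc ∫ y in t..t + T, a y * (u y + μ) * deriv w y
      = ∫ y in t..t + T, (a y * u y * deriv w y + μ * (a y * deriv w y)) :=
        integral_congr fun y _ ↦ by ring
    _ = (∫ y in t..t + T, a y * u y * deriv w y) + μ * ∫ y in t..t + T, a y * deriv w y := by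
        rw [integral_add hint (hint'.const_mul μ), intervalIntegral.integral_const_mul]
    _ = 0 := by rw [hweak w hw hwper, neg_add_cancel]

end Fourier

section HarmonicMean

variable {a : ℝ → ℝ}

lemma harmMean_pos (hint : IntervalIntegrable (fun y ↦ 1 / a y) volume (-(1 / 2)) (1 / 2))
    (hpos : ∀ y ∈ Ioo (-(1 / 2)) (1 / 2), 0 < a y) : 0 < harmMean a :=
  inv_pos.mpr <| intervalIntegral_pos_of_pos_on hint
    (fun y hy ↦ one_div_pos.mpr (hpos y hy)) (by norm_num)

lemma eq_mul_harmMean_of_integral_eq_zero {c μ : ℝ} (ha : harmMean a ≠ 0)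
    (hmean : ∫ y in (-(1 / 2) : ℝ)..(1 / 2), (c * (1 / a y) - μ) = 0) : c = μ * harmMean a := by
  have hI : ∫ y in (-(1 / 2) : ℝ)..(1 / 2), 1 / a y ≠ 0 := mt inv_eq_zero.mpr ha
  rw [integral_sub ((intervalIntegrable_of_integral_ne_zero hI).const_mul c)
    intervalIntegrable_const, intervalIntegral.integral_const_mul,
    intervalIntegral.integral_const, smul_eq_mul] at hmean
  rw [harmMean, eq_mul_inv_iff_mul_eq₀ hI]
  linarith

end HarmonicMean

/-- **Microscopic problem, uniqueness and linearity.** With `a⁰` continuous,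
1-periodic and bounded as `0 < α ≤ a⁰ ≤ β`: if `φ` is `C¹`, 1-periodic and
satisfies `∫ a⁰ φ' w' = −μ ∫ a⁰ w'` for every smooth 1-periodic `w`, then
`φ'(y) = μ (h/a⁰(y) − 1) = μ (θ¹)'(y)` for all `y`. -/
theorem microscopic_problem_uniqueness (a : ℝ → ℝ) (α β : ℝ)
    (ha : Continuous a) (haper : ∀ y, a (y + 1) = a y)
    (hα : 0 < α) (hαβ : α ≤ β) (hbound : ∀ y, α ≤ a y ∧ a y ≤ β)
    (μ : ℝ) (φ : ℝ → ℝ) (hφ : ContDiff ℝ 1 φ) (hφper : ∀ y, φ (y + 1) = φ y)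
    (hweak : ∀ w : ℝ → ℝ, ContDiff ℝ (⊤ : ℕ∞) w → (∀ y, w (y + 1) = w y) →
      ∫ y in (-(1 / 2) : ℝ)..(1 / 2), a y * deriv φ y * deriv w y
        = -(μ * ∫ y in (-(1 / 2) : ℝ)..(1 / 2), a y * deriv w y)) :
    ∀ y, deriv φ y = μ * (harmMean a / a y - 1) := by
  have hne (y : ℝ) : a y ≠ 0 := (hα.trans_le (hbound y).1).ne'
  have hinv : Continuous fun y ↦ 1 / a y := continuous_const.div ha hne
  have hcell : (-(1 / 2) + 1 : ℝ) = 1 / 2 := by norm_num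
  obtain ⟨c, hflux⟩ : ∃ c, ∀ y, a y * (deriv φ y + μ) = c :=
    exists_mul_add_eq_const_of_weak_eq (T := 1) (t := -(1 / 2)) ha haper
      (hφ.continuous_deriv le_rfl) (periodic_deriv hφper)
      (by simpa only [hcell, Function.Periodic] using hweak)
  have hderiv (y : ℝ) : deriv φ y = c * (1 / a y) - μ := by
    rw [← hflux y, mul_one_div, mul_div_cancel_left₀ _ (hne y), add_sub_cancel_right]
  have hmean : ∫ y in (-(1 / 2) : ℝ)..(1 / 2), (c * (1 / a y) - μ) = 0 := by
    simpa only [hderiv, hcell] using integral_deriv_eq_zero_of_periodic hφ hφper (-(1 / 2))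
  have hharm : 0 < harmMean a :=
    harmMean_pos (hinv.intervalIntegrable _ _) fun y _ ↦ hα.trans_le (hbound y).1
  intro y
  rw [hderiv, eq_mul_harmMean_of_integral_eq_zero hharm.ne' hmean]
  ring
end

section
/- The homogenized coefficient a^H = ∫_{−1/2}^{1/2} a⁰(y) (1 + (θ¹)'(y))² dy equals h, the harmonic mean of a⁰ over the unit cell: ∫_{−1/2}^{1/2} a⁰(y) (1 + (θ¹)'(y))² dy = (∫_{−1/2}^{1/2} 1/a⁰(y) dy)⁻¹. -/
/-!
By Lebesgue differentiation `1 + θ' = h / a` almost everywhere. Hence the flux `a (1 + θ')` is the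
constant `h`, and `1 + θ'` has mean one over the unit cell. The energy density is the flux times
`1 + θ'`, so its integral over the cell is `h`.
-/

open Set MeasureTheory intervalIntegral

section

open scoped Interval

variable {a : ℝ → ℝ}

theorem integral_one_div_pos_of_continuousOn {x y : ℝ} (hxy : x < y)
    (ha : ContinuousOn a (Icc x y)) (hpos : ∀ t ∈ Icc x y, 0 < a t) :
    0 < ∫ t in x..y, 1 / a t :=
  intervalIntegral_pos_of_pos_on
    ((continuousOn_const.div ha fun t ht => (hpos t ht).ne').intervalIntegrable_of_Icc hxy.le)
    (fun t ht => one_div_pos.2 (hpos t (Ioo_subset_Icc_self ht))) hxy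

theorem ae_one_add_deriv_theta1_eq {x y : ℝ} (hzero : (0 : ℝ) ∈ [[x, y]])
    (hint : IntervalIntegrable (fun t => 1 / a t) volume x y) :
    ∀ᵐ t, t ∈ Ι x y → 1 + deriv (theta1 a) t = harmMean a / a t := by
  have hcorr : IntervalIntegrable (fun t => harmMean a / a t - 1) volume x y := by
    simpa only [mul_one_div] using
      (hint.const_mul (harmMean a)).sub (_root_.intervalIntegrable_const (c := (1 : ℝ)))
  filter_upwards [hcorr.ae_hasDerivAt_integral] with t hderiv ht
  have hθ : HasDerivAt (theta1 a) (harmMean a / a t - 1) t :=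
    hderiv (uIoc_subset_uIcc ht) 0 hzero
  rw [hθ.deriv, add_sub_cancel]

theorem ae_flux_eq_harmMean {x y : ℝ} (hzero : (0 : ℝ) ∈ [[x, y]])
    (hint : IntervalIntegrable (fun t => 1 / a t) volume x y)
    (hne : ∀ᵐ t, t ∈ Ι x y → a t ≠ 0) :
    ∀ᵐ t, t ∈ Ι x y → a t * (1 + deriv (theta1 a) t) = harmMean a := by
  filter_upwards [ae_one_add_deriv_theta1_eq hzero hint, hne] with t hgrad hat ht
  rw [hgrad ht, mul_div_cancel₀ _ (hat ht)]

theorem zero_mem_unitCell : (0 : ℝ) ∈ [[-(1 / 2), 1 / 2]] :=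
  mem_uIcc.2 (by norm_num)

theorem integral_one_add_deriv_theta1 (hI : ∫ y in (-(1 / 2) : ℝ)..(1 / 2), 1 / a y ≠ 0) :
    ∫ y in (-(1 / 2) : ℝ)..(1 / 2), (1 + deriv (theta1 a) y) = 1 := by
  calc ∫ y in (-(1 / 2) : ℝ)..(1 / 2), (1 + deriv (theta1 a) y)
      = ∫ y in (-(1 / 2) : ℝ)..(1 / 2), harmMean a * (1 / a y) := by
        simpa only [mul_one_div] using integral_congr_ae
          (ae_one_add_deriv_theta1_eq zero_mem_unitCell
            (intervalIntegrable_of_integral_ne_zero hI))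
    _ = harmMean a * ∫ y in (-(1 / 2) : ℝ)..(1 / 2), 1 / a y := integral_const_mul _ _
    _ = 1 := inv_mul_cancel₀ hI

-- The integral of a non-integrable function is `0`, so `hI` includes the integrability of `1 / a`.
theorem homogenized_coefficient_is_harmonic_mean_general
    (hne : ∀ᵐ y, y ∈ Ι (-(1 / 2) : ℝ) (1 / 2) → a y ≠ 0)
    (hI : ∫ y in (-(1 / 2) : ℝ)..(1 / 2), 1 / a y ≠ 0) :
    ∫ y in (-(1 / 2) : ℝ)..(1 / 2), a y * (1 + deriv (theta1 a) y) ^ 2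
      = (∫ y in (-(1 / 2) : ℝ)..(1 / 2), 1 / a y)⁻¹ := by
  have hflux := ae_flux_eq_harmMean zero_mem_unitCell
    (intervalIntegrable_of_integral_ne_zero hI) hne
  calc ∫ y in (-(1 / 2) : ℝ)..(1 / 2), a y * (1 + deriv (theta1 a) y) ^ 2
      = ∫ y in (-(1 / 2) : ℝ)..(1 / 2), harmMean a * (1 + deriv (theta1 a) y) := by
        refine integral_congr_ae ?_
        filter_upwards [hflux] with y hy hmem
        rw [sq, ← mul_assoc, hy hmem]
    _ = harmMean a * ∫ y in (-(1 / 2) : ℝ)..(1 / 2), (1 + deriv (theta1 a) y) :=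
        integral_const_mul _ _
    _ = harmMean a := by rw [integral_one_add_deriv_theta1 hI, mul_one]

end

/-- **The homogenized coefficient is the harmonic mean.**
`a^H = ∫_{-1/2}^{1/2} a⁰ (1 + (θ¹)')² = (∫_{-1/2}^{1/2} 1/a⁰)⁻¹ = h`. -/
theorem homogenized_coefficient_is_harmonic_mean (a : ℝ → ℝ) (α β : ℝ)
    (ha : Continuous a) (haper : ∀ y, a (y + 1) = a y)
    (hα : 0 < α) (hαβ : α ≤ β) (hbound : ∀ y, α ≤ a y ∧ a y ≤ β) :
    ∫ y in (-(1 / 2) : ℝ)..(1 / 2), a y * (1 + deriv (theta1 a) y) ^ 2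
      = (∫ y in (-(1 / 2) : ℝ)..(1 / 2), 1 / a y)⁻¹ := by
  have hpos : ∀ y, 0 < a y := fun y => hα.trans_le (hbound y).1
  exact homogenized_coefficient_is_harmonic_mean_general (.of_forall fun y _ => (hpos y).ne')
    (integral_one_div_pos_of_continuousOn (by norm_num) ha.continuousOn fun y _ => hpos y).ne'
end

section
/- First Block (constraint on u⁰): under the sequence setting and the two-scale expansion hypothesis, the limit u⁰ is independent of the microscopic variable: there exists ū ∈ L²(0,1) such that u⁰(x,y) = ū(x) for almost every (x,y) ∈ (0,1) × (−1/2, 1/2). -/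
open Set MeasureTheory Filter

/-- The two-scale domain `(0,1) × (-1/2, 1/2)`. -/
noncomputable def twoScaleDom : Set (ℝ × ℝ) :=
  Ioo (0 : ℝ) 1 ×ˢ Ioo (-(1 / 2) : ℝ) (1 / 2)

/-! The microscopic derivative gains a factor `ε`, namely `∂_y (T u) = ε T u'`, and `T` preserves
integrals, so `T u` differs from a function of `x` alone (its value `T u (x, 0)` at the centre of
the cell) by `O(ε ‖u'‖)` in `L²`. The component of `u⁰` orthogonal to the functions of `x` alone is
`v = u⁰ - ū`, where `ū` is the fiber mean; since `T u_N` converges weakly to `u⁰` and its pairing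
with `v` only sees that small difference, `‖v‖² = ⟨u⁰, v⟩ = lim ⟨T u_N, v⟩ = 0`. -/

lemma tendsto_one_div_sq_mul_zero_of_le {a : ℕ → ℝ} {c : ℝ} (ha : ∀ n, 0 ≤ a n)
    (hac : ∀ n, a n ≤ c) : Tendsto (fun n : ℕ ↦ (1 / (n : ℝ)) ^ 2 * a n) atTop (nhds 0) := by
  have hlim : Tendsto (fun n : ℕ ↦ (1 / (n : ℝ)) ^ 2 * c) atTop (nhds 0) := by
    simpa using (tendsto_one_div_atTop_nhds_zero_nat.pow 2).mul_const c
  exact squeeze_zero (fun n ↦ mul_nonneg (sq_nonneg _) (ha n))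
    (fun n ↦ mul_le_mul_of_nonneg_left (hac n) (sq_nonneg _)) hlim

section L2

variable {α : Type*} [MeasurableSpace α] {μ : Measure α}

lemma sq_integral_mul_le {f g : α → ℝ} (hf : MemLp f 2 μ) (hg : MemLp g 2 μ) :
    (∫ a, f a * g a ∂μ) ^ 2 ≤ (∫ a, f a ^ 2 ∂μ) * ∫ a, g a ^ 2 ∂μ := by
  have inner_toLp {h k : α → ℝ} (hh : MemLp h 2 μ) (hk : MemLp k 2 μ) :
      inner ℝ (hh.toLp h) (hk.toLp k) = ∫ a, h a * k a ∂μ := by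
    rw [L2.inner_def]
    refine integral_congr_ae ?_
    filter_upwards [hh.coeFn_toLp, hk.coeFn_toLp] with a ha ka
    simp [ha, ka, mul_comm]
  simpa only [inner_toLp, ← sq] using real_inner_mul_inner_self_le (hf.toLp f) (hg.toLp g)

lemma sq_integral_le_measureReal_univ_mul [IsFiniteMeasure μ] {f : α → ℝ} (hf : MemLp f 2 μ) :
    (∫ a, f a ∂μ) ^ 2 ≤ μ.real univ * ∫ a, f a ^ 2 ∂μ := by
  simpa [mul_comm] using sq_integral_mul_le hf (memLp_const 1)

lemma tendsto_integral_mul_of_first_order_expansion {F : ℕ → α → ℝ} {f f₁ g : α → ℝ}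
    (hF : ∀ᶠ n in atTop, MemLp (F n) 2 μ) (hf : MemLp f 2 μ) (hf₁ : MemLp f₁ 2 μ)
    (hg : MemLp g 2 μ)
    (hexp : Tendsto (fun n : ℕ ↦ (n : ℝ) * ∫ a, (F n a - f a - (1 / (n : ℝ)) * f₁ a) * g a ∂μ)
      atTop (nhds 0)) :
    Tendsto (fun n ↦ ∫ a, F n a * g a ∂μ) atTop (nhds (∫ a, f a * g a ∂μ)) := by
  have hinv : Tendsto (fun n : ℕ ↦ 1 / (n : ℝ)) atTop (nhds 0) :=
    tendsto_one_div_atTop_nhds_zero_nat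
  have hlim := ((hinv.mul hexp).add (hinv.mul_const (∫ a, f₁ a * g a ∂μ))).const_add
    (∫ a, f a * g a ∂μ)
  rw [mul_zero, zero_mul, add_zero, add_zero] at hlim
  refine hlim.congr' ?_
  filter_upwards [hF, eventually_ne_atTop 0] with n hFn hn
  have hFg : Integrable (fun a ↦ F n a * g a) μ := hFn.integrable_mul hg
  have hfg : Integrable (fun a ↦ f a * g a) μ := hf.integrable_mul hg
  have hf₁g : Integrable (fun a ↦ f₁ a * g a) μ := hf₁.integrable_mul hg
  have hexpand : ∫ a, (F n a - f a - (1 / (n : ℝ)) * f₁ a) * g a ∂μ =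
      ∫ a, F n a * g a ∂μ - ∫ a, f a * g a ∂μ - (1 / (n : ℝ)) * ∫ a, f₁ a * g a ∂μ := by
    rw [← integral_const_mul, ← integral_sub hFg hfg, ← integral_sub]
    · congr with a
      ring
    · exact hFg.sub hfg
    · exact hf₁g.const_mul _
  rw [hexpand]
  field_simp
  ring

end L2

lemma memLp_two_restrict_Ioo_of_continuous {f : ℝ → ℝ} (hf : Continuous f) (a b : ℝ) :
    MemLp f 2 (volume.restrict (Ioo a b)) :=
  (memLp_two_iff_integrable_sq hf.aestronglyMeasurable).2
    ((hf.pow 2).integrableOn_Icc.mono_set Ioo_subset_Icc_self)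

lemma sq_sub_le_integral_deriv_sq {f : ℝ → ℝ} (hf : ContDiff ℝ 1 f) {a b s t : ℝ}
    (hs : s ∈ Ioo a b) (ht : t ∈ Ioo a b) :
    (f t - f s) ^ 2 ≤ (b - a) * ∫ x in Ioo a b, deriv f x ^ 2 := by
  have hcont : Continuous (deriv f) := hf.continuous_deriv_one
  have hL2 : MemLp (fun x ↦ ‖deriv f x‖) 2 (volume.restrict (Ioo a b)) :=
    (memLp_two_restrict_Ioo_of_continuous hcont a b).norm
  have hincr : |f t - f s| ≤ ∫ x in Ioo a b, ‖deriv f x‖ := calc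
    |f t - f s| = ‖∫ x in s..t, deriv f x‖ := by
      rw [intervalIntegral.integral_deriv_eq_sub
        (fun x _ ↦ hf.differentiable_one x) (hcont.intervalIntegrable _ _), Real.norm_eq_abs]
    _ ≤ ∫ x in uIoc s t, ‖deriv f x‖ := intervalIntegral.norm_integral_le_integral_norm_uIoc
    _ ≤ ∫ x in Ioo a b, ‖deriv f x‖ :=
      setIntegral_mono_set (hL2.integrable one_le_two) (.of_forall fun _ ↦ norm_nonneg _)
        (uIoc_subset_uIcc.trans (ordConnected_Ioo.uIcc_subset hs ht)).eventuallyLE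
  calc (f t - f s) ^ 2 ≤ (∫ x in Ioo a b, ‖deriv f x‖) ^ 2 := by
        rw [← sq_abs]; gcongr
    _ ≤ (b - a) * ∫ x in Ioo a b, deriv f x ^ 2 := by
      simpa [(hs.1.trans hs.2).le] using sq_integral_le_measureReal_univ_mul hL2

section FiberMean

variable {α β : Type*} [MeasurableSpace α] [MeasurableSpace β] {μ : Measure α} {ν : Measure β}
  {f : α × β → ℝ}

/-- The average of `f` over the second variable, as a function of the first one. For a probability
measure `ν` it realises the orthogonal projection of `L²` onto the functions of the first variable,
and is thus the candidate for `ū`. -/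
noncomputable def fiberMean (ν : Measure β) (f : α × β → ℝ) (x : α) : ℝ := ∫ y, f (x, y) ∂ν

lemma integrable_fiberMean_comp_fst [IsFiniteMeasure ν] (hf : Integrable f (μ.prod ν)) :
    Integrable (fun p : α × β ↦ fiberMean ν f p.1) (μ.prod ν) :=
  hf.integral_prod_left.comp_fst ν

variable [SFinite μ]

lemma ae_memLp_two_prodMk [SFinite ν] (hf : MemLp f 2 (μ.prod ν)) :
    ∀ᵐ x ∂μ, MemLp (fun y ↦ f (x, y)) 2 ν := by
  filter_upwards [hf.1.prodMk_left, hf.integrable_sq.prod_right_ae] with x hmeas hsq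
  exact (memLp_two_iff_integrable_sq hmeas).2 hsq

lemma memLp_fiberMean [IsFiniteMeasure ν] (hf : MemLp f 2 (μ.prod ν)) :
    MemLp (fiberMean ν f) 2 μ := by
  have hmeas : AEStronglyMeasurable (fiberMean ν f) μ := hf.1.integral_prod_right'
  rw [memLp_two_iff_integrable_sq hmeas]
  refine (hf.integrable_sq.integral_prod_left.const_mul (ν.real univ)).mono' (hmeas.pow 2) ?_
  filter_upwards [ae_memLp_two_prodMk hf] with x hx
  simpa [fiberMean] using sq_integral_le_measureReal_univ_mul hx

lemma memLp_fiberMean_comp_fst [IsFiniteMeasure ν] (hf : MemLp f 2 (μ.prod ν)) :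
    MemLp (fun p : α × β ↦ fiberMean ν f p.1) 2 (μ.prod ν) :=
  (memLp_fiberMean hf).comp_fst ν

variable [IsProbabilityMeasure ν]

lemma integral_fiberMean_comp_fst (hf : Integrable f (μ.prod ν)) :
    ∫ p : α × β, fiberMean ν f p.1 ∂μ.prod ν = ∫ p, f p ∂μ.prod ν := by
  rw [integral_fun_fst, probReal_univ, one_smul, integral_prod f hf]
  rfl

lemma integral_mul_sub_fiberMean_eq_zero (hf : MemLp f 2 (μ.prod ν)) {g : α → ℝ}
    (hg : MemLp (fun p : α × β ↦ g p.1) 2 (μ.prod ν)) :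
    ∫ p : α × β, g p.1 * (f p - fiberMean ν f p.1) ∂μ.prod ν = 0 := by
  have hint : Integrable (fun p : α × β ↦ g p.1 * (f p - fiberMean ν f p.1)) (μ.prod ν) :=
    hg.integrable_mul (hf.sub (memLp_fiberMean_comp_fst hf))
  rw [integral_prod _ hint]
  refine integral_eq_zero_of_ae ?_
  filter_upwards [ae_memLp_two_prodMk hf] with x hx
  rw [integral_const_mul, integral_sub (hx.integrable one_le_two) (integrable_const _)]
  simp [fiberMean]

theorem ae_eq_fiberMean_of_tendsto_integral_mul {ι : Type*} {l : Filter ι} [l.NeBot]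
    {F : ι → α × β → ℝ} {G : ι → α → ℝ} (hf : MemLp f 2 (μ.prod ν))
    (hF : ∀ᶠ i in l, MemLp (F i) 2 (μ.prod ν))
    (hFG : ∀ᶠ i in l, MemLp (fun p ↦ F i p - G i p.1) 2 (μ.prod ν))
    (hdist : Tendsto (fun i ↦ ∫ p, (F i p - G i p.1) ^ 2 ∂μ.prod ν) l (nhds 0))
    (hweak : ∀ v, MemLp v 2 (μ.prod ν) →
      Tendsto (fun i ↦ ∫ p, F i p * v p ∂μ.prod ν) l (nhds (∫ p, f p * v p ∂μ.prod ν))) :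
    ∀ᵐ p ∂μ.prod ν, f p = fiberMean ν f p.1 := by
  set v : α × β → ℝ := fun p ↦ f p - fiberMean ν f p.1
  have hv : MemLp v 2 (μ.prod ν) := hf.sub (memLp_fiberMean_comp_fst hf)
  have integral_mul_eq {h : α × β → ℝ} {g : α → ℝ} (hh : MemLp h 2 (μ.prod ν))
      (hhg : MemLp (fun p ↦ h p - g p.1) 2 (μ.prod ν)) :
      ∫ p, h p * v p ∂μ.prod ν = ∫ p, (h p - g p.1) * v p ∂μ.prod ν := by
    have hg : MemLp (fun p : α × β ↦ g p.1) 2 (μ.prod ν) :=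
      (hh.sub hhg).ae_eq (.of_forall fun _ ↦ sub_sub_cancel _ _)
    have hhv : Integrable (fun p ↦ h p * v p) (μ.prod ν) := hh.integrable_mul hv
    have hgv : Integrable (fun p ↦ g p.1 * v p) (μ.prod ν) := hg.integrable_mul hv
    simp_rw [sub_mul]
    rw [integral_sub hhv hgv, integral_mul_sub_fiberMean_eq_zero hf hg, sub_zero]
  have hlim : Tendsto (fun i ↦ (∫ p, F i p * v p ∂μ.prod ν) ^ 2) l (nhds 0) := by
    refine squeeze_zero' (.of_forall fun _ ↦ sq_nonneg _) ?_
      (by simpa using hdist.mul_const (∫ p, v p ^ 2 ∂μ.prod ν))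
    filter_upwards [hF, hFG] with i hFi hFGi
    rw [integral_mul_eq hFi hFGi]
    exact sq_integral_mul_le hFGi hv
  have hfv : ∫ p, f p * v p ∂μ.prod ν = 0 :=
    pow_eq_zero_iff two_ne_zero |>.1 (tendsto_nhds_unique ((hweak v hv).pow 2) hlim)
  have hvsq : ∫ p, v p ^ 2 ∂μ.prod ν = 0 := by
    simpa only [sq] using! (integral_mul_eq hf hv).symm.trans hfv
  filter_upwards [(integral_eq_zero_iff_of_nonneg (fun p ↦ sq_nonneg (v p)) hv.integrable_sq).1
    hvsq] with p hp
  exact sub_eq_zero.1 (pow_eq_zero_iff two_ne_zero |>.1 hp)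

end FiberMean
section TwoScale

/-- The point with microscopic coordinate `p.2` in the cell of size `ε` containing `p.1`, so that
`twoScale N u x y = u (twoScalePoint (1 / N) (x, y))`. -/
noncomputable def twoScalePoint (ε : ℝ) (p : ℝ × ℝ) : ℝ :=
  ε * ((⌊p.1 / ε⌋ : ℝ) + 1 / 2) + ε * p.2

lemma measurable_twoScalePoint (ε : ℝ) : Measurable (twoScalePoint ε) := by
  unfold twoScalePoint
  fun_prop

lemma floor_twoScalePoint_div_eq_iff {ε : ℝ} (hε : 0 < ε) (p : ℝ × ℝ) :
    ⌊twoScalePoint ε p / ε⌋ = ⌊p.1 / ε⌋ ↔ p.2 ∈ Ico (-(1 / 2) : ℝ) (1 / 2) := by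
  have hdiv : twoScalePoint ε p / ε = ⌊p.1 / ε⌋ + 1 / 2 + p.2 := by
    unfold twoScalePoint
    field_simp
  rw [hdiv, Int.floor_eq_iff, mem_Ico]
  constructor <;> rintro ⟨h₁, h₂⟩ <;> constructor <;> linarith

lemma volume_setOf_floor_div_eq {ε : ℝ} (hε : 0 < ε) (k : ℤ) :
    volume {x : ℝ | ⌊x / ε⌋ = k} = ENNReal.ofReal ε := by
  have hset : {x : ℝ | ⌊x / ε⌋ = k} = (· * ε⁻¹) ⁻¹' Ico (k : ℝ) (k + 1) := by
    ext x
    simp [div_eq_mul_inv, Int.floor_eq_iff]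
  rw [hset, Real.volume_preimage_mul_right (inv_ne_zero hε.ne')]
  simp [abs_of_pos hε]

lemma volume_restrict_preimage_twoScalePoint {ε : ℝ} (hε : 0 < ε) (x : ℝ) (s : Set ℝ) :
    volume.restrict (Ico (-(1 / 2) : ℝ) (1 / 2)) {y | twoScalePoint ε (x, y) ∈ s} =
      ENNReal.ofReal ε⁻¹ * volume {t ∈ s | ⌊x / ε⌋ = ⌊t / ε⌋} := by
  have hset : {y | twoScalePoint ε (x, y) ∈ s} ∩ Ico (-(1 / 2) : ℝ) (1 / 2) =
      (ε * ·) ⁻¹' ((ε * ((⌊x / ε⌋ : ℝ) + 1 / 2) + ·) ⁻¹' {t ∈ s | ⌊x / ε⌋ = ⌊t / ε⌋}) := by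
    ext y
    rw [mem_inter_iff, ← floor_twoScalePoint_div_eq_iff hε (x, y), eq_comm]
    rfl
  rw [Measure.restrict_apply' measurableSet_Ico, hset, Real.volume_preimage_mul_left hε.ne',
    measure_preimage_add, abs_of_pos (inv_pos.2 hε)]

lemma measurePreserving_twoScalePoint {ε : ℝ} (hε : 0 < ε) :
    MeasurePreserving (twoScalePoint ε)
      (volume.prod (volume.restrict (Ico (-(1 / 2) : ℝ) (1 / 2)))) volume := by
  refine ⟨measurable_twoScalePoint ε, Measure.ext fun s hs ↦ ?_⟩
  let sameCell : Set (ℝ × ℝ) := {q | q.2 ∈ s ∧ ⌊q.1 / ε⌋ = ⌊q.2 / ε⌋}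
  have hmeas : MeasurableSet sameCell :=
    (measurable_snd hs).inter (measurableSet_eq_fun (by fun_prop) (by fun_prop))
  -- By Tonelli the slices of `sameCell` may be taken at the image point `t` instead of at `x`; such
  -- a slice is the whole cell of `t`, whose length `ε` cancels the Jacobian `ε⁻¹` of `y ↦ t`.
  have hslice (t : ℝ) : volume ((fun x ↦ (x, t)) ⁻¹' sameCell) =
      s.indicator (fun _ ↦ ENNReal.ofReal ε) t := by
    by_cases ht : t ∈ s
    · simpa [sameCell, ht] using volume_setOf_floor_div_eq hε ⌊t / ε⌋
    · simp [sameCell, ht]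
  calc Measure.map (twoScalePoint ε) (volume.prod (volume.restrict (Ico (-(1 / 2)) (1 / 2)))) s
      = ∫⁻ x, volume.restrict (Ico (-(1 / 2) : ℝ) (1 / 2)) {y | twoScalePoint ε (x, y) ∈ s} := by
        rw [Measure.map_apply (measurable_twoScalePoint ε) hs,
          Measure.prod_apply (measurable_twoScalePoint ε hs)]
        rfl
    _ = ENNReal.ofReal ε⁻¹ * ∫⁻ x, volume (Prod.mk x ⁻¹' sameCell) := by
        simp_rw [volume_restrict_preimage_twoScalePoint hε]
        exact lintegral_const_mul _ (measurable_measure_prodMk_left hmeas)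
    _ = ENNReal.ofReal ε⁻¹ * ∫⁻ t, volume ((fun x ↦ (x, t)) ⁻¹' sameCell) := by
        rw [← Measure.prod_apply hmeas, Measure.prod_apply_symm hmeas]
    _ = volume s := by
        simp_rw [hslice]
        rw [lintegral_indicator_const hs, ← mul_assoc, ← ENNReal.ofReal_mul (inv_nonneg.2 hε.le),
          inv_mul_cancel₀ hε.ne', ENNReal.ofReal_one, one_mul]

lemma mem_Ico_zero_one_iff_floor_div {N : ℕ} (hN : 0 < N) (t : ℝ) :
    t ∈ Ico (0 : ℝ) 1 ↔ ⌊t / (1 / (N : ℝ))⌋ ∈ Ico (0 : ℤ) N := by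
  have hN' : (0 : ℝ) < N := Nat.cast_pos.2 hN
  rw [mem_Ico, mem_Ico, Int.floor_nonneg, Int.floor_lt, div_div_eq_mul_div, div_one,
    Int.cast_natCast, mul_nonneg_iff_of_pos_right hN', mul_lt_iff_lt_one_left hN']

lemma measurePreserving_twoScalePoint_restrict {N : ℕ} (hN : 0 < N) :
    MeasurePreserving (twoScalePoint (1 / (N : ℝ))) (volume.restrict twoScaleDom)
      (volume.restrict (Ioo (0 : ℝ) 1)) := by
  have hε : 0 < 1 / (N : ℝ) := by positivity
  have hpreimage : twoScalePoint (1 / (N : ℝ)) ⁻¹' Ico 0 1 ∩ univ ×ˢ Ico (-(1 / 2) : ℝ) (1 / 2) =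
      Ico (0 : ℝ) 1 ×ˢ Ico (-(1 / 2) : ℝ) (1 / 2) := by
    ext p
    simp only [mem_inter_iff, mem_preimage, mem_prod, mem_univ, true_and]
    refine and_congr_left fun hp ↦ ?_
    rw [mem_Ico_zero_one_iff_floor_div hN, (floor_twoScalePoint_div_eq_iff hε p).2 hp,
      ← mem_Ico_zero_one_iff_floor_div hN]
  have hdom : (twoScaleDom : Set (ℝ × ℝ)) =ᵐ[volume]
      Ico (0 : ℝ) 1 ×ˢ Ico (-(1 / 2) : ℝ) (1 / 2) :=
    Measure.set_prod_ae_eq Ioo_ae_eq_Ico Ioo_ae_eq_Ico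
  have h := (measurePreserving_twoScalePoint hε).restrict_preimage
    (measurableSet_Ico (a := 0) (b := 1))
  rwa [← Measure.restrict_univ (μ := volume), Measure.prod_restrict, Measure.restrict_univ,
    Measure.restrict_restrict (measurable_twoScalePoint _ measurableSet_Ico), hpreimage,
    ← Measure.volume_eq_prod, ← Measure.restrict_congr_set hdom,
    ← Measure.restrict_congr_set Ioo_ae_eq_Ico] at h

lemma memLp_twoScale_s12 {N : ℕ} (hN : 0 < N) {f : ℝ → ℝ} {q : ENNReal}
    (hf : MemLp f q (volume.restrict (Ioo (0 : ℝ) 1))) :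
    MemLp (fun p : ℝ × ℝ ↦ twoScale N f p.1 p.2) q (volume.restrict twoScaleDom) :=
  hf.comp_measurePreserving (measurePreserving_twoScalePoint_restrict hN)

lemma eventually_memLp_two_twoScale {u : ℕ → ℝ → ℝ} (hu : ∀ N, Continuous (u N)) :
    ∀ᶠ N : ℕ in atTop, MemLp (fun p : ℝ × ℝ ↦ twoScale N (u N) p.1 p.2) 2
      (volume.restrict twoScaleDom) := by
  filter_upwards [eventually_gt_atTop 0] with N hN
  exact memLp_twoScale_s12 hN (memLp_two_restrict_Ioo_of_continuous (hu N) 0 1)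

lemma integral_twoScale {N : ℕ} (hN : 0 < N) {f : ℝ → ℝ}
    (hf : AEStronglyMeasurable f (volume.restrict (Ioo (0 : ℝ) 1))) :
    ∫ p in twoScaleDom, twoScale N f p.1 p.2 = ∫ x in Ioo (0 : ℝ) 1, f x := by
  have hmp := measurePreserving_twoScalePoint_restrict hN
  rw [← hmp.map_eq] at hf ⊢
  exact (integral_map hmp.measurable.aemeasurable hf).symm

lemma contDiff_twoScale (N : ℕ) {f : ℝ → ℝ} {n : WithTop ℕ∞} (hf : ContDiff ℝ n f) (x : ℝ) :
    ContDiff ℝ n (twoScale N f x) := by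
  unfold twoScale
  fun_prop

lemma deriv_twoScale (N : ℕ) (f : ℝ → ℝ) (x y : ℝ) :
    deriv (twoScale N f x) y = (1 / (N : ℝ)) * twoScale N (deriv f) x y := by
  unfold twoScale
  rw [deriv_comp_mul_left (1 / (N : ℝ)) (fun t ↦ f (_ + t)), deriv_comp_const_add, smul_eq_mul]

lemma volume_restrict_twoScaleDom :
    volume.restrict twoScaleDom = (volume.restrict (Ioo (0 : ℝ) 1)).prod
      (volume.restrict (Ioo (-(1 / 2) : ℝ) (1 / 2))) :=
  (Measure.prod_restrict _ _).symm

instance isProbabilityMeasure_volume_restrict_unitCell :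
    IsProbabilityMeasure (volume.restrict (Ioo (-(1 / 2) : ℝ) (1 / 2))) :=
  ⟨by norm_num⟩

lemma sq_twoScale_sub_center_le (N : ℕ) {f : ℝ → ℝ} (hf : ContDiff ℝ 1 f) (x : ℝ) {y : ℝ}
    (hy : y ∈ Ioo (-(1 / 2) : ℝ) (1 / 2)) :
    (twoScale N f x y - twoScale N f x 0) ^ 2 ≤
      fiberMean (volume.restrict (Ioo (-(1 / 2) : ℝ) (1 / 2)))
        (fun p ↦ ((1 / (N : ℝ)) * twoScale N (deriv f) p.1 p.2) ^ 2) x := by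
  have h := sq_sub_le_integral_deriv_sq (contDiff_twoScale N hf x)
    (show (0 : ℝ) ∈ Ioo (-(1 / 2)) (1 / 2) by norm_num) hy
  simp_rw [deriv_twoScale] at h
  rwa [sub_neg_eq_add, add_halves, one_mul] at h

lemma ae_sq_twoScale_sub_center_le (N : ℕ) {f : ℝ → ℝ} (hf : ContDiff ℝ 1 f) :
    ∀ᵐ p ∂volume.restrict twoScaleDom, (twoScale N f p.1 p.2 - twoScale N f p.1 0) ^ 2 ≤
      fiberMean (volume.restrict (Ioo (-(1 / 2) : ℝ) (1 / 2)))
        (fun p ↦ ((1 / (N : ℝ)) * twoScale N (deriv f) p.1 p.2) ^ 2) p.1 := by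
  filter_upwards [ae_restrict_mem (measurableSet_Ioo.prod measurableSet_Ioo)] with p hp
  exact sq_twoScale_sub_center_le N hf p.1 hp.2

lemma integrable_sq_deriv_twoScale {N : ℕ} (hN : 0 < N) {f : ℝ → ℝ} (hf : ContDiff ℝ 1 f) :
    Integrable (fun p : ℝ × ℝ ↦ ((1 / (N : ℝ)) * twoScale N (deriv f) p.1 p.2) ^ 2)
      (volume.restrict twoScaleDom) :=
  ((memLp_twoScale_s12 hN (memLp_two_restrict_Ioo_of_continuous hf.continuous_deriv_one 0 1)).const_mul
    _).integrable_sq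

lemma memLp_twoScale_sub_center {N : ℕ} (hN : 0 < N) {f : ℝ → ℝ} (hf : ContDiff ℝ 1 f) :
    MemLp (fun p : ℝ × ℝ ↦ twoScale N f p.1 p.2 - twoScale N f p.1 0) 2
      (volume.restrict twoScaleDom) := by
  have hmeas : Measurable fun p : ℝ × ℝ ↦ twoScale N f p.1 p.2 :=
    hf.continuous.measurable.comp (measurable_twoScalePoint _)
  have hmeas_sub : Measurable fun p : ℝ × ℝ ↦ twoScale N f p.1 p.2 - twoScale N f p.1 0 :=
    hmeas.sub (hmeas.comp (measurable_fst.prodMk measurable_const))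
  have hint := integrable_sq_deriv_twoScale hN hf
  rw [memLp_two_iff_integrable_sq hmeas_sub.aestronglyMeasurable]
  have hbound := ae_sq_twoScale_sub_center_le N hf
  rw [volume_restrict_twoScaleDom] at hint hbound ⊢
  refine (integrable_fiberMean_comp_fst hint).mono' (hmeas_sub.pow_const 2).aestronglyMeasurable ?_
  simpa using hbound

lemma integral_sq_twoScale_sub_center_le {N : ℕ} (hN : 0 < N) {f : ℝ → ℝ} (hf : ContDiff ℝ 1 f) :
    ∫ p in twoScaleDom, (twoScale N f p.1 p.2 - twoScale N f p.1 0) ^ 2 ≤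
      (1 / (N : ℝ)) ^ 2 * ∫ x in Ioo (0 : ℝ) 1, deriv f x ^ 2 := by
  have hint := integrable_sq_deriv_twoScale hN hf
  have hbound := ae_sq_twoScale_sub_center_le N hf
  have hsq := (memLp_twoScale_sub_center hN hf).integrable_sq
  have hunfold : ∫ p in twoScaleDom, twoScale N (deriv f) p.1 p.2 ^ 2 =
      ∫ x in Ioo (0 : ℝ) 1, deriv f x ^ 2 :=
    integral_twoScale hN (hf.continuous_deriv_one.pow 2).aestronglyMeasurable
  rw [← hunfold, ← integral_const_mul]
  simp_rw [← mul_pow]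
  rw [volume_restrict_twoScaleDom] at hint hbound hsq ⊢
  rw [← integral_fiberMean_comp_fst hint]
  exact integral_mono_ae hsq (integrable_fiberMean_comp_fst hint) hbound

end TwoScale

theorem first_block_u0_independent_of_microscopic_variable_general
    (u : ℕ → ℝ → ℝ) (hu : ∀ N, ContDiff ℝ 1 (u N))
    (hderiv : Tendsto (fun N : ℕ ↦ (1 / (N : ℝ)) ^ 2 * ∫ x in Ioo (0 : ℝ) 1, deriv (u N) x ^ 2)
      atTop (nhds 0))
    (u0 : ℝ × ℝ → ℝ) (hu0 : MemLp u0 2 (volume.restrict twoScaleDom))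
    (hweak : ∀ v : ℝ × ℝ → ℝ, MemLp v 2 (volume.restrict twoScaleDom) →
      Tendsto (fun N : ℕ ↦ ∫ p in twoScaleDom, twoScale N (u N) p.1 p.2 * v p) atTop
        (nhds (∫ p in twoScaleDom, u0 p * v p))) :
    ∃ ub : ℝ → ℝ, MemLp ub 2 (volume.restrict (Ioo (0 : ℝ) 1)) ∧
      ∀ᵐ p ∂(volume.restrict twoScaleDom), u0 p = ub p.1 := by
  have hmem := eventually_memLp_two_twoScale fun N ↦ (hu N).continuous
  have hmem_sub : ∀ᶠ N : ℕ in atTop, MemLp (fun p : ℝ × ℝ ↦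
      twoScale N (u N) p.1 p.2 - twoScale N (u N) p.1 0) 2 (volume.restrict twoScaleDom) := by
    filter_upwards [eventually_gt_atTop 0] with N hN
    exact memLp_twoScale_sub_center hN (hu N)
  have hdist : Tendsto (fun N : ℕ ↦ ∫ p in twoScaleDom,
      (twoScale N (u N) p.1 p.2 - twoScale N (u N) p.1 0) ^ 2) atTop (nhds 0) := by
    refine squeeze_zero' (.of_forall fun _ ↦ integral_nonneg fun _ ↦ sq_nonneg _) ?_ hderiv
    filter_upwards [eventually_gt_atTop 0] with N hN
    exact integral_sq_twoScale_sub_center_le hN (hu N)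
  rw [volume_restrict_twoScaleDom] at hu0 hweak hmem hmem_sub hdist ⊢
  exact ⟨fiberMean _ u0, memLp_fiberMean hu0,
    ae_eq_fiberMean_of_tendsto_integral_mul (G := fun N x ↦ twoScale N (u N) x 0) hu0
      hmem hmem_sub hdist hweak⟩

/-- **First Block: constraint on `u⁰`.** Under the uniform `H¹` bounds and the
two-scale expansion hypothesis, the two-scale limit `u⁰` is independent of the
microscopic variable: `u⁰(x,y) = ū(x)` a.e. for some `ū ∈ L²(0,1)`. -/
theorem first_block_u0_independent_of_microscopic_variable
    (u : ℕ → ℝ → ℝ) (hu : ∀ N, ContDiff ℝ 1 (u N))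
    (C : ℝ) (hC : 0 < C)
    (hbound : ∀ N : ℕ, (∫ x in Ioo (0 : ℝ) 1, (u N x) ^ 2) ≤ C ^ 2 ∧
      (∫ x in Ioo (0 : ℝ) 1, (deriv (u N) x) ^ 2) ≤ C ^ 2)
    (u0 u1 : ℝ × ℝ → ℝ)
    (hu0 : MemLp u0 2 (volume.restrict twoScaleDom))
    (hu1 : MemLp u1 2 (volume.restrict twoScaleDom))
    (hexp : ∀ v : ℝ × ℝ → ℝ, MemLp v 2 (volume.restrict twoScaleDom) →
      Tendsto (fun N : ℕ => (N : ℝ) *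
          ∫ p in twoScaleDom,
            (twoScale N (u N) p.1 p.2 - u0 p - (1 / (N : ℝ)) * u1 p) * v p)
        atTop (nhds 0)) :
    ∃ ub : ℝ → ℝ, MemLp ub 2 (volume.restrict (Ioo (0 : ℝ) 1)) ∧
      ∀ᵐ p ∂(volume.restrict twoScaleDom), u0 p = ub p.1 := by
  exact first_block_u0_independent_of_microscopic_variable_general u hu
    (tendsto_one_div_sq_mul_zero_of_le (fun _ ↦ integral_nonneg fun _ ↦ sq_nonneg _)
      fun N ↦ (hbound N).2) u0 hu0 fun v hv ↦
        tendsto_integral_mul_of_first_order_expansion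
          (eventually_memLp_two_twoScale fun N ↦ (hu N).continuous) hu0 hu1 hv (hexp v hv)
end

section
/- Second Block (two-scale limit of the derivative): under the sequence setting, the two-scale expansion hypothesis, and the weak two-scale convergence of the derivatives to η, one has η = ∂u¹/∂y in the sense of distributions: for every infinitely differentiable φ : ℝ² → ℝ with compact support contained in (0,1) × (−1/2, 1/2), ∫∫_{(0,1)×(−1/2,1/2)} η φ dx dy = − ∫∫_{(0,1)×(−1/2,1/2)} u¹ (∂φ/∂y) dx dy. -/
/-!
In the variable `y` the transform `T_N u_N` has derivative `(1/N) T_N (u_N')`, so for a test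
function `φ` vanishing at `y = ±1/2`,
`∫∫ T_N (u_N') φ = -N ∫∫ T_N u_N ∂φ/∂y = -N ∫∫ u⁰ ∂φ/∂y - ∫∫ u¹ ∂φ/∂y + o(1)`,
by integration by parts followed by the two-scale expansion tested against `∂φ/∂y`.
As soon as the left side is bounded, the term of order `N` must vanish, and the limit of the left
side is `-∫∫ u¹ ∂φ/∂y`.
-/

open Set MeasureTheory Filter

open Asymptotics

lemma eq_zero_of_smul_const_isBigO_one {ι E : Type*} [NormedAddCommGroup E] [NormedSpace ℝ E]
    {l : Filter ι} [l.NeBot] {r : ι → ℝ} {c : E} (hr : Tendsto r l atTop)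
    (hc : (fun i => r i • c) =O[l] (fun _ => (1 : ℝ))) : c = 0 := by
  have hsmul : Tendsto (fun i => (r i)⁻¹ • r i • c) l (nhds 0) := by
    refine ((isBigO_refl (fun i => (r i)⁻¹) l).smul hc).trans_tendsto ?_
    simpa only [smul_eq_mul, mul_one] using! hr.inv_tendsto_atTop
  refine tendsto_nhds_unique (tendsto_const_nhds.congr' ?_) hsmul
  filter_upwards [hr.eventually_ne_atTop 0] with i hi
  rw [inv_smul_smul₀ hi]

lemma tendsto_of_tendsto_add_smul_of_isBigO_one {ι E : Type*} [NormedAddCommGroup E]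
    [NormedSpace ℝ E] {l : Filter ι} [l.NeBot] {r : ι → ℝ} {I : ι → E} {k c : E}
    (hr : Tendsto r l atTop) (hlim : Tendsto (fun i => I i + r i • k) l (nhds c))
    (hI : I =O[l] (fun _ => (1 : ℝ))) : Tendsto I l (nhds c) := by
  have hk : k = 0 := eq_zero_of_smul_const_isBigO_one hr <| by
    simpa only [add_sub_cancel_left] using (hlim.isBigO_one ℝ).sub hI
  simpa only [hk, smul_zero, add_zero] using hlim

lemma memLp_restrict_comp_of_mapsTo_isBounded {α X E : Type*} [MeasurableSpace α]
    [PseudoMetricSpace X] [ProperSpace X] [MeasurableSpace X] [OpensMeasurableSpace X]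
    [NormedAddCommGroup E] {μ : Measure α} {s : Set α} {t : Set X} {G : α → X} {F : X → E}
    (p : ENNReal) (hs : MeasurableSet s) (hμs : μ s ≠ ⊤) (hG : Measurable G)
    (ht : Bornology.IsBounded t) (hst : MapsTo G s t) (hF : Continuous F) :
    MemLp (F ∘ G) p (μ.restrict s) := by
  have : IsFiniteMeasure (μ.restrict s) := isFiniteMeasure_restrict.2 hμs
  obtain ⟨M, hM⟩ := ht.isCompact_closure.exists_bound_of_continuousOn hF.continuousOn
  exact .of_bound (hF.stronglyMeasurable.comp_measurable hG).aestronglyMeasurable M <|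
    ae_restrict_of_forall_mem hs fun a ha => hM _ (subset_closure (hst ha))

lemma setIntegral_prod_Ioo_eq_zero_of_hasDerivAt {α E : Type*} [MeasurableSpace α]
    [NormedAddCommGroup E] [NormedSpace ℝ E] [CompleteSpace E] {μ : Measure α} [SFinite μ]
    {s : Set α} {a b : ℝ} {h h' : α × ℝ → E} (hs : MeasurableSet s) (hab : a ≤ b)
    (hderiv : ∀ x ∈ s, ∀ y ∈ Icc a b, HasDerivAt (fun y => h (x, y)) (h' (x, y)) y)
    (hint : IntegrableOn h' (s ×ˢ Ioo a b) (μ.prod volume))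
    (hends : ∀ x ∈ s, h (x, a) = h (x, b)) :
    ∫ p in s ×ˢ Ioo a b, h' p ∂μ.prod volume = 0 := by
  have hslice : ∀ᵐ x ∂μ.restrict s, IntegrableOn (fun y => h' (x, y)) (Ioo a b) := by
    rw [IntegrableOn, ← Measure.prod_restrict] at hint
    exact hint.prod_right_ae
  rw [setIntegral_prod _ hint]
  refine integral_eq_zero_of_ae ?_
  filter_upwards [hslice, ae_restrict_mem hs] with x hx hxs
  rw [← integral_Ioc_eq_integral_Ioo, ← intervalIntegral.integral_of_le hab,
    intervalIntegral.integral_eq_sub_of_hasDerivAt (by simpa [uIcc_of_le hab] using hderiv x hxs)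
      ((intervalIntegrable_iff_integrableOn_Ioo_of_le hab).2 hx), hends x hxs, sub_self,
    Pi.zero_apply]

lemma mul_integral_sub_sub_one_div_mul {α : Type*} [MeasurableSpace α] {μ : Measure α} {r : ℝ}
    (hr : r ≠ 0) {f f₀ f₁ g : α → ℝ} (hf : Integrable (fun p => f p * g p) μ)
    (hf₀ : Integrable (fun p => f₀ p * g p) μ) (hf₁ : Integrable (fun p => f₁ p * g p) μ) :
    r * ∫ p, (f p - f₀ p - (1 / r) * f₁ p) * g p ∂μ =
      r * ∫ p, f p * g p ∂μ - r * ∫ p, f₀ p * g p ∂μ - ∫ p, f₁ p * g p ∂μ := by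
  have hexpand : ∀ p, (f p - f₀ p - (1 / r) * f₁ p) * g p =
      f p * g p - f₀ p * g p - (1 / r) * (f₁ p * g p) := fun p => by ring
  simp only [hexpand]
  rw [integral_sub (hf.sub' hf₀) (hf₁.const_mul _), integral_sub hf hf₀, integral_const_mul]
  field_simp

section PartialDerivSnd

variable {E F : Type*} [NormedAddCommGroup E] [NormedSpace ℝ E] [NormedAddCommGroup F]
  [NormedSpace ℝ F] {φ : E × ℝ → F}

/-- The partial derivative `∂φ/∂y` of a function `φ` of two variables `(x, y)`, with `y` real.
As for `deriv`, its value is `0` where `φ (x, ·)` is not differentiable. -/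
noncomputable def partialDerivSnd {α : Type*} (φ : α × ℝ → F) (p : α × ℝ) : F :=
  deriv (fun y => φ (p.1, y)) p.2

lemma hasDerivAt_partialDerivSnd {x : E} {y : ℝ} (hφ : DifferentiableAt ℝ φ (x, y)) :
    HasDerivAt (fun y => φ (x, y)) (partialDerivSnd φ (x, y)) y :=
  (hφ.comp y (by fun_prop : DifferentiableAt ℝ (fun y => (x, y)) y)).hasDerivAt

lemma partialDerivSnd_eq_fderiv_apply {p : E × ℝ} (hφ : DifferentiableAt ℝ φ p) :
    partialDerivSnd φ p = fderiv ℝ φ p (0, 1) :=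
  (hφ.hasFDerivAt.comp_hasDerivAt p.2
    ((hasDerivAt_const p.2 p.1).prodMk (hasDerivAt_id p.2))).deriv

lemma continuous_partialDerivSnd (hφ : ContDiff ℝ 1 φ) : Continuous (partialDerivSnd φ) := by
  have heq : partialDerivSnd φ = fun p => fderiv ℝ φ p (0, 1) :=
    funext fun p => partialDerivSnd_eq_fderiv_apply (hφ.differentiable one_ne_zero p)
  rw [heq]
  exact (hφ.continuous_fderiv one_ne_zero).clm_apply continuous_const

end PartialDerivSnd

lemma measurableSet_twoScaleDom : MeasurableSet twoScaleDom :=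
  measurableSet_Ioo.prod measurableSet_Ioo

lemma isBounded_twoScaleDom : Bornology.IsBounded twoScaleDom :=
  (Metric.isBounded_Ioo 0 1).prod (Metric.isBounded_Ioo _ _)

lemma memLp_twoScaleDom_of_continuous {E : Type*} [NormedAddCommGroup E] {g : ℝ × ℝ → E}
    (p : ENNReal) (hg : Continuous g) : MemLp g p (volume.restrict twoScaleDom) :=
  memLp_restrict_comp_of_mapsTo_isBounded p measurableSet_twoScaleDom
    isBounded_twoScaleDom.measure_lt_top.ne measurable_id isBounded_twoScaleDom (mapsTo_id _) hg

lemma integrableOn_twoScaleDom_mul_continuous {f g : ℝ × ℝ → ℝ} (hf : IntegrableOn f twoScaleDom)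
    (hg : Continuous g) : IntegrableOn (fun p => f p * g p) twoScaleDom :=
  hf.mul_of_top_left (memLp_twoScaleDom_of_continuous ⊤ hg)

lemma twoScale_eq_apply_twoScale_id (N : ℕ) (f : ℝ → ℝ) (x y : ℝ) :
    twoScale N f x y = f (twoScale N id x y) :=
  rfl

lemma measurable_twoScale_id (N : ℕ) : Measurable fun p : ℝ × ℝ => twoScale N id p.1 p.2 := by
  unfold twoScale
  fun_prop

lemma mapsTo_twoScale_id (N : ℕ) :
    MapsTo (fun p : ℝ × ℝ => twoScale N id p.1 p.2) twoScaleDom (Icc 0 2) := by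
  rintro ⟨x, y⟩ ⟨⟨hx0, hx1⟩, hy0, hy1⟩
  dsimp only [twoScale, id] at *
  set ε : ℝ := 1 / (N : ℝ) with hε
  have hε0 : 0 ≤ ε := by positivity
  have hε1 : ε ≤ 1 := by simpa [hε] using Nat.cast_inv_le_one N
  have hcell0 : 0 ≤ ε * ⌊x / ε⌋ :=
    mul_nonneg hε0 (Int.cast_nonneg (Int.floor_nonneg.2 (by positivity)))
  have hcell1 : ε * ⌊x / ε⌋ ≤ x :=
    (mul_le_mul_of_nonneg_left (Int.floor_le _) hε0).trans
      (by rw [mul_div_left_comm]; exact mul_le_of_le_one_right hx0.le (div_self_le_one ε))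
  constructor <;> nlinarith

lemma integrableOn_twoScale (N : ℕ) {f : ℝ → ℝ} (hf : Continuous f) :
    IntegrableOn (fun p : ℝ × ℝ => twoScale N f p.1 p.2) twoScaleDom :=
  memLp_one_iff_integrable.1 <|
    memLp_restrict_comp_of_mapsTo_isBounded 1 measurableSet_twoScaleDom
      isBounded_twoScaleDom.measure_lt_top.ne (measurable_twoScale_id N) (Metric.isBounded_Icc 0 2)
      (mapsTo_twoScale_id N) hf

lemma hasDerivAt_twoScale (N : ℕ) {f : ℝ → ℝ} {x y : ℝ}
    (hf : DifferentiableAt ℝ f (twoScale N id x y)) :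
    HasDerivAt (twoScale N f x) (1 / (N : ℝ) * twoScale N (deriv f) x y) y := by
  have hid : HasDerivAt (twoScale N id x) (1 / (N : ℝ)) y := by
    simpa only [mul_one] using! ((hasDerivAt_id y).const_mul (1 / (N : ℝ))).const_add
      ((1 / (N : ℝ)) * ((⌊x / (1 / (N : ℝ))⌋ : ℝ) + 1 / 2))
  rw [twoScale_eq_apply_twoScale_id N (deriv f), mul_comm]
  exact hf.hasDerivAt.comp y hid

lemma setIntegral_twoScale_deriv_mul {N : ℕ} (hN : N ≠ 0) {f : ℝ → ℝ} (hf : ContDiff ℝ 1 f)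
    {φ : ℝ × ℝ → ℝ} (hφ : ContDiff ℝ 1 φ) (hbot : ∀ x ∈ Ioo (0 : ℝ) 1, φ (x, -(1 / 2)) = 0)
    (htop : ∀ x ∈ Ioo (0 : ℝ) 1, φ (x, 1 / 2) = 0) :
    ∫ p in twoScaleDom, twoScale N (deriv f) p.1 p.2 * φ p =
      -(N * ∫ p in twoScaleDom, twoScale N f p.1 p.2 * partialDerivSnd φ p) := by
  have hint_deriv := integrableOn_twoScaleDom_mul_continuous
    (integrableOn_twoScale N (hf.continuous_deriv le_rfl)) hφ.continuous
  have hint := integrableOn_twoScaleDom_mul_continuous (integrableOn_twoScale N hf.continuous)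
    (continuous_partialDerivSnd hφ)
  have hzero : ∫ p in twoScaleDom, (1 / (N : ℝ) * (twoScale N (deriv f) p.1 p.2 * φ p) +
      twoScale N f p.1 p.2 * partialDerivSnd φ p) = 0 := by
    refine setIntegral_prod_Ioo_eq_zero_of_hasDerivAt (h := fun p => twoScale N f p.1 p.2 * φ p)
      measurableSet_Ioo (by norm_num) (fun x _ y _ => ?_) ((hint_deriv.const_mul _).add hint)
      (fun x hx => by simp only [hbot x hx, htop x hx, mul_zero])
    rw [← mul_assoc]
    exact (hasDerivAt_twoScale N (hf.differentiable one_ne_zero _)).mul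
      (hasDerivAt_partialDerivSnd (hφ.differentiable one_ne_zero _))
  rw [integral_add (hint_deriv.const_mul _) hint, integral_const_mul] at hzero
  rw [eq_neg_of_add_eq_zero_right hzero]
  field_simp

theorem second_block_two_scale_limit_of_derivative_general
    {u : ℕ → ℝ → ℝ} (hu : ∀ N, ContDiff ℝ 1 (u N)) {u0 u1 φ : ℝ × ℝ → ℝ}
    (hu0 : IntegrableOn u0 twoScaleDom) (hu1 : IntegrableOn u1 twoScaleDom)
    (hφ : ContDiff ℝ 1 φ) (hbot : ∀ x ∈ Ioo (0 : ℝ) 1, φ (x, -(1 / 2)) = 0)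
    (htop : ∀ x ∈ Ioo (0 : ℝ) 1, φ (x, 1 / 2) = 0)
    (hexp : Tendsto (fun N : ℕ => (N : ℝ) * ∫ p in twoScaleDom,
        (twoScale N (u N) p.1 p.2 - u0 p - (1 / (N : ℝ)) * u1 p) * partialDerivSnd φ p)
      atTop (nhds 0))
    (hbdd : (fun N : ℕ => ∫ p in twoScaleDom, twoScale N (deriv (u N)) p.1 p.2 * φ p)
      =O[atTop] (fun _ => (1 : ℝ))) :
    Tendsto (fun N : ℕ => ∫ p in twoScaleDom, twoScale N (deriv (u N)) p.1 p.2 * φ p)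
      atTop (nhds (-∫ p in twoScaleDom, u1 p * partialDerivSnd φ p)) := by
  have hψ := continuous_partialDerivSnd hφ
  set k := ∫ p in twoScaleDom, u0 p * partialDerivSnd φ p
  set c := ∫ p in twoScaleDom, u1 p * partialDerivSnd φ p
  have hlim : Tendsto (fun N : ℕ => (∫ p in twoScaleDom, twoScale N (deriv (u N)) p.1 p.2 * φ p) +
      (N : ℝ) • k) atTop (nhds (-c)) := by
    rw [← sub_zero (-c)]
    refine (hexp.const_sub (-c)).congr' ?_
    filter_upwards [eventually_ne_atTop 0] with N hN
    rw [setIntegral_twoScale_deriv_mul hN (hu N) hφ hbot htop,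
      mul_integral_sub_sub_one_div_mul (Nat.cast_ne_zero.2 hN)
        (integrableOn_twoScaleDom_mul_continuous (integrableOn_twoScale N (hu N).continuous) hψ)
        (integrableOn_twoScaleDom_mul_continuous hu0 hψ)
        (integrableOn_twoScaleDom_mul_continuous hu1 hψ), smul_eq_mul]
    ring
  exact tendsto_of_tendsto_add_smul_of_isBigO_one tendsto_natCast_atTop_atTop hlim hbdd

/-- **Second Block: two-scale limit of the derivative.** Under the sequence
setting, the two-scale expansion hypothesis and the weak two-scale convergence
of the derivatives to `η`, one has `η = ∂u¹/∂y` in the sense of distributions. -/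
theorem second_block_two_scale_limit_of_derivative
    (u : ℕ → ℝ → ℝ) (hu : ∀ N, ContDiff ℝ 1 (u N))
    (C : ℝ) (hC : 0 < C)
    (hbound : ∀ N : ℕ, (∫ x in Ioo (0 : ℝ) 1, (u N x) ^ 2) ≤ C ^ 2 ∧
      (∫ x in Ioo (0 : ℝ) 1, (deriv (u N) x) ^ 2) ≤ C ^ 2)
    (u0 u1 : ℝ × ℝ → ℝ)
    (hu0 : MemLp u0 2 (volume.restrict twoScaleDom))
    (hu1 : MemLp u1 2 (volume.restrict twoScaleDom))
    (hexp : ∀ v : ℝ × ℝ → ℝ, MemLp v 2 (volume.restrict twoScaleDom) →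
      Tendsto (fun N : ℕ => (N : ℝ) *
          ∫ p in twoScaleDom,
            (twoScale N (u N) p.1 p.2 - u0 p - (1 / (N : ℝ)) * u1 p) * v p)
        atTop (nhds 0))
    (η : ℝ × ℝ → ℝ) (hη : MemLp η 2 (volume.restrict twoScaleDom))
    (hweak : ∀ v : ℝ × ℝ → ℝ, MemLp v 2 (volume.restrict twoScaleDom) →
      Tendsto (fun N : ℕ =>
          ∫ p in twoScaleDom, twoScale N (deriv (u N)) p.1 p.2 * v p)
        atTop (nhds (∫ p in twoScaleDom, η p * v p))) :
    ∀ φ : ℝ × ℝ → ℝ, ContDiff ℝ (⊤ : ℕ∞) φ → HasCompactSupport φ →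
      tsupport φ ⊆ twoScaleDom →
      ∫ p in twoScaleDom, η p * φ p
        = -∫ p in twoScaleDom, u1 p * deriv (fun y => φ (p.1, y)) p.2 := by
  intro φ hφ _ hsupp
  have hφ_one : ContDiff ℝ 1 φ := hφ.of_le (by simp)
  have : IsFiniteMeasure (volume.restrict twoScaleDom) :=
    isFiniteMeasure_restrict.2 isBounded_twoScaleDom.measure_lt_top.ne
  have hvanish : ∀ x y, y ∉ Ioo (-(1 / 2) : ℝ) (1 / 2) → φ (x, y) = 0 := fun x y hy =>
    image_eq_zero_of_notMem_tsupport fun h => hy (hsupp h).2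
  have hlim := hweak φ (memLp_twoScaleDom_of_continuous 2 hφ.continuous)
  exact tendsto_nhds_unique hlim <|
    second_block_two_scale_limit_of_derivative_general hu (hu0.integrable one_le_two)
      (hu1.integrable one_le_two) hφ_one (fun x _ => hvanish x _ (by simp))
      (fun x _ => hvanish x _ (by simp))
      (hexp _ (memLp_twoScaleDom_of_continuous 2 (continuous_partialDerivSnd hφ_one)))
      (hlim.isBigO_one ℝ)
end
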